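/- arXiv:2602.10033 — 12 statements merged into one kernel-verified Lean document; each statement's English description precedes it below -/
import Mathlib

section
/- Let c : ℕ → ℝ be a sequence. Suppose m ≥ 1 is not a geometric time of c, and let n < m be the largest geometric time of c smaller than m (with n = 0 if no geometric time smaller than m exists). Then ∑_{i=n}^{m−1} c_i < m − n. -/
/-- An integer `n ≥ 1` is a *geometric time* of the sequence `c : ℕ → ℝ` if
for every `k` with `0 ≤ k ≤ n-1` one has `∑_{i=k}^{n-1} c i ≥ n - k`. -/
def IsGeometricTime (c : ℕ → ℝ) (n : ℕ) : Prop :=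
  1 ≤ n ∧ ∀ k : ℕ, k < n → ((n : ℝ) - (k : ℝ)) ≤ ∑ i ∈ Finset.Ico k n, c i

/-- If `m ≥ 1` is not a geometric time of `c` and `n < m` is the largest geometric time
smaller than `m` (with `n = 0` if there is no geometric time smaller than `m`), then
`∑_{i=n}^{m-1} c i < m - n`. -/
theorem sum_lt_of_largest_geometric_time (c : ℕ → ℝ) (m n : ℕ)
    (hm : 1 ≤ m) (hnot : ¬ IsGeometricTime c m) (hnm : n < m)
    (hn : (IsGeometricTime c n ∧ ∀ k : ℕ, IsGeometricTime c k → k < m → k ≤ n) ∨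
          (n = 0 ∧ ∀ k : ℕ, k < m → ¬ IsGeometricTime c k)) :
    ∑ i ∈ Finset.Ico n m, c i < (m : ℝ) - (n : ℝ) := by
  set S : ℕ → ℝ := fun k => ∑ i ∈ Finset.range k, c i - k with hS
  have key : ∀ a b : ℕ, a ≤ b → ∑ i ∈ Finset.Ico a b, c i = S b - S a + (b - a) := by
    intro a b hab
    rw [Finset.sum_Ico_eq_sub _ hab]
    simp only [hS]
    ring
  have h1 : ∀ k, k ≤ n → S k ≤ S n := by
    intro k hk
    rcases hk.eq_or_lt with rfl | hlt
    · exact le_rfl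
    rcases hn with ⟨h, _⟩ | ⟨h, _⟩
    · have := h.2 k hlt
      rw [key k n hk] at this
      linarith
    · omega
  have h2 : ∀ k, n < k → k ≤ m → ¬ IsGeometricTime c k := by
    intro k hk hkm hg
    rcases hkm.eq_or_lt with rfl | hlt
    · exact hnot hg
    rcases hn with ⟨_, h⟩ | ⟨_, h⟩
    · have := h k hg hlt
      omega
    · exact h k hlt hg
  have h3 : ∀ k, n < k → k ≤ m → S k < S n := by
    intro k
    induction k using Nat.strong_induction_on with
    | _ k ih =>
      intro hk hkm
      by_contra hc
      refine h2 k hk hkm ⟨by omega, fun j hj => ?_⟩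
      rw [key j k hj.le]
      have : S j ≤ S n := by
        rcases le_or_gt j n with h | h
        · exact h1 j h
        · exact (ih j hj h (by omega)).le
      linarith
  have := h3 m hnm le_rfl
  rw [key n m hnm.le]
  linarith
end

section
/- Let c : ℕ → ℝ be a sequence, let E ⊆ ℕ be its set of geometric times, and let L ≥ 1 be an integer. If i is an integer such that both i and i+1 belong to the L-expansion E^L, then there exists an integer l with 1 ≤ l ≤ L such that i + l is a geometric time of c; consequently ∑_{m=i}^{i+l−1} c_m ≥ l. -/
/-- The `L`-expansion `E^L` of a set `E ⊆ ℕ`: the union of all integer intervals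
`[a, b]` with `a, b ∈ E` and `0 ≤ b - a ≤ L`. -/
def LExpansion (E : Set ℕ) (L : ℕ) : Set ℕ :=
  {x : ℕ | ∃ a ∈ E, ∃ b ∈ E, a ≤ b ∧ b ≤ a + L ∧ a ≤ x ∧ x ≤ b}

/-- If `i` and `i+1` both belong to the `L`-expansion of the set of geometric times of `c`
(`L ≥ 1`), then there is `l` with `1 ≤ l ≤ L` such that `i + l` is a geometric time of `c`,
and consequently `∑_{m=i}^{i+l-1} c m ≥ l`. -/
theorem exists_geometric_time_of_mem_LExpansion (c : ℕ → ℝ) (L : ℕ) (hL : 1 ≤ L)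
    (i : ℕ)
    (hi : i ∈ LExpansion {n : ℕ | IsGeometricTime c n} L)
    (hi1 : i + 1 ∈ LExpansion {n : ℕ | IsGeometricTime c n} L) :
    ∃ l : ℕ, 1 ≤ l ∧ l ≤ L ∧ IsGeometricTime c (i + l) ∧
      (l : ℝ) ≤ ∑ m ∈ Finset.Ico i (i + l), c m := by
  have key : ∃ l : ℕ, 1 ≤ l ∧ l ≤ L ∧ IsGeometricTime c (i + l) := by
    obtain ⟨a, ha, b, hb, hab, hbL, hai, hib⟩ := hi1
    rcases Nat.lt_or_ge i a with h | h
    · have h2 : a = i + 1 := by omega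
      subst h2
      exact ⟨1, le_refl 1, hL, ha⟩
    · refine ⟨b - i, by omega, by omega, ?_⟩
      have h2 : i + (b - i) = b := by omega
      rw [h2]
      exact hb
  obtain ⟨l, h1, h2, h3⟩ := key
  refine ⟨l, h1, h2, h3, ?_⟩
  have h4 := h3.2 i (by omega)
  push_cast at h4
  linarith
end

section
/- Let c : ℕ → ℝ be a sequence. Suppose that for every n ∈ ℕ there exists an integer l ≥ 1 such that ∑_{m=n}^{n+l−1} c_m ≥ l. Then limsup_{n→∞} (1/n) ∑_{m=0}^{n−1} c_m ≥ 1. -/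
/-- If for every `n` there is `l ≥ 1` with `∑_{m=n}^{n+l-1} c m ≥ l`, then the upper
Birkhoff average `limsup_{n→∞} (1/n) ∑_{m=0}^{n-1} c m` is at least `1`
(the limsup being taken in the extended reals). -/
theorem one_le_limsup_average (c : ℕ → ℝ)
    (h : ∀ n : ℕ, ∃ l : ℕ, 1 ≤ l ∧ (l : ℝ) ≤ ∑ m ∈ Finset.Ico n (n + l), c m) :
    (1 : EReal) ≤
      Filter.limsup (fun n : ℕ =>
        (((1 / (n : ℝ)) * ∑ m ∈ Finset.range n, c m : ℝ) : EReal)) Filter.atTop := by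
  have key : ∀ N : ℕ, ∃ n : ℕ, N ≤ n ∧ (n : ℝ) ≤ ∑ m ∈ Finset.range n, c m := by
    intro N
    induction N with
    | zero => exact ⟨0, le_rfl, by simp⟩
    | succ N ih =>
      obtain ⟨n, hn, hs⟩ := ih
      obtain ⟨l, hl, hc⟩ := h n
      refine ⟨n + l, by omega, ?_⟩
      rw [← Finset.sum_range_add_sum_Ico c (Nat.le_add_right n l)]
      push_cast
      linarith
  apply Filter.le_limsup_of_frequently_le'
  rw [Filter.frequently_atTop]
  intro N
  obtain ⟨n, hn, hs⟩ := key (N + 1)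
  refine ⟨n, by omega, ?_⟩
  have hpos : (0 : ℝ) < n := by
    have : 0 < n := by omega
    exact_mod_cast this
  have h1 : (1 : ℝ) ≤ (1 / (n : ℝ)) * ∑ m ∈ Finset.range n, c m := by
    rw [one_div_mul_eq_div, le_div_iff₀ hpos]
    linarith
  exact_mod_cast h1
end

section
/- Let X be a compact metric space and f : X → X a continuous map. Fix L ≥ 1. For each n ≥ 1, let x_n ∈ X and let E_n ⊆ {0,1,…,n−1} be a finite union of at most n/L + 2 pairwise disjoint integer intervals, and set ν_n := (1/n) ∑_{i∈E_n} δ_{f^i(x_n)} (a finite Borel measure on X of total mass at most 1). Then: (i) for every continuous h : X → ℝ and every n, |∫ h dν_n − ∫ (h∘f) dν_n| ≤ ((n/L + 2)·2/n)·sup_{x∈X}|h(x)|; (ii) consequently, if ν_n converges weakly to a finite Borel measure ν^L as n → ∞, then |∫ h dν^L − ∫ (h∘f) dν^L| ≤ (2/L)·sup_{x∈X}|h(x)| for every continuous h; and (iii) if moreover ν^L converges weakly to a finite Borel measure ν as L → ∞, then ν is f-invariant, i.e. ∫ h dν = ∫ (h∘f) dν for every continuous h : X → ℝ. -/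
open MeasureTheory Filter

lemma ico_bound (g : ℕ → ℝ) (M : ℝ) (hg : ∀ i, |g i| ≤ M) (a b : ℕ) :
    |∑ i ∈ Finset.Ico a b, (g i - g (i + 1))| ≤ 2 * M := by
  have hM : 0 ≤ M := (abs_nonneg _).trans (hg 0)
  rcases le_total a b with hab | hab
  · have h1 : ∑ i ∈ Finset.Ico a b, (g i - g (i + 1)) = g a - g b := by
      induction b, hab using Nat.le_induction with
      | base => simp
      | succ b hb ih => rw [Finset.sum_Ico_succ_top hb, ih]; ring
    rw [h1]
    have h2 := abs_le.1 (hg a)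
    have h3 := abs_le.1 (hg b)
    exact abs_le.2 ⟨by linarith, by linarith⟩
  · rw [Finset.Ico_eq_empty_of_le hab]
    simpa using hM

lemma union_bound (g : ℕ → ℝ) (M : ℝ) (hg : ∀ i, |g i| ≤ M) (E : Finset ℕ) (k : ℕ)
    (a b : Fin k → ℕ) (hE : (E : Set ℕ) = ⋃ j : Fin k, Set.Ico (a j) (b j))
    (hd : Pairwise fun j j' : Fin k =>
      Disjoint (Set.Ico (a j) (b j)) (Set.Ico (a j') (b j'))) :
    |∑ i ∈ E, (g i - g (i + 1))| ≤ k * (2 * M) := by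
  have h1 : E = Finset.univ.biUnion (fun j => Finset.Ico (a j) (b j)) := by
    apply Finset.coe_injective
    rw [hE]
    simp
  rw [h1, Finset.sum_biUnion]
  · refine (Finset.abs_sum_le_sum_abs _ _).trans ?_
    refine (Finset.sum_le_sum fun j _ => ico_bound g M hg (a j) (b j)).trans ?_
    simp
  · intro j _ j' _ hjj
    have this : Disjoint (Set.Ico (a j) (b j)) (Set.Ico (a j') (b j')) := hd hjj
    rw [← Finset.coe_Ico, ← Finset.coe_Ico, Finset.disjoint_coe] at this
    exact this

/-- Empirical measures along subsets of `{0,…,n-1}` consisting of at most `n/L + 2`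
pairwise disjoint integer intervals: (i) quantitative almost-invariance for each `n`;
(ii) almost-invariance of weak limits as `n → ∞`; (iii) invariance of a weak limit
as `L → ∞`. -/
theorem empirical_measures_along_intervals_invariant
    {X : Type*} [MetricSpace X] [CompactSpace X] [MeasurableSpace X] [BorelSpace X]
    (f : X → X) (hf : Continuous f)
    (x : ℕ → X) (E : ℕ → ℕ → Finset ℕ)
    (hErange : ∀ L n : ℕ, 1 ≤ L → 1 ≤ n → E L n ⊆ Finset.range n)
    (hEint : ∀ L n : ℕ, 1 ≤ L → 1 ≤ n → ∃ (k : ℕ) (a b : Fin k → ℕ),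
        (k : ℝ) ≤ (n : ℝ) / (L : ℝ) + 2 ∧
        ((E L n : Finset ℕ) : Set ℕ) = ⋃ j : Fin k, Set.Ico (a j) (b j) ∧
        Pairwise fun j j' : Fin k =>
          Disjoint (Set.Ico (a j) (b j)) (Set.Ico (a j') (b j')))
    (ν : ℕ → ℕ → Measure X)
    (hν : ∀ L n : ℕ, ν L n =
      ((n : ENNReal))⁻¹ • ∑ i ∈ E L n, Measure.dirac (f^[i] (x n))) :
    -- (i)
    (∀ (h : C(X, ℝ)) (L n : ℕ), 1 ≤ L → 1 ≤ n →
        |(∫ y, h y ∂(ν L n)) - ∫ y, h (f y) ∂(ν L n)| ≤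
          (((n : ℝ) / (L : ℝ) + 2) * 2 / (n : ℝ)) * ⨆ y : X, |h y|) ∧
    -- (ii) and (iii)
    (∀ (νL : ℕ → Measure X), (∀ L : ℕ, IsFiniteMeasure (νL L)) →
      (∀ L : ℕ, 1 ≤ L → ∀ h : C(X, ℝ),
          Tendsto (fun n : ℕ => ∫ y, h y ∂(ν L n)) atTop (nhds (∫ y, h y ∂(νL L)))) →
      ((∀ (h : C(X, ℝ)) (L : ℕ), 1 ≤ L →
          |(∫ y, h y ∂(νL L)) - ∫ y, h (f y) ∂(νL L)| ≤ (2 / (L : ℝ)) * ⨆ y : X, |h y|) ∧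
        (∀ μ : Measure X, IsFiniteMeasure μ →
          (∀ h : C(X, ℝ),
            Tendsto (fun L : ℕ => ∫ y, h y ∂(νL L)) atTop (nhds (∫ y, h y ∂μ))) →
          ∀ h : C(X, ℝ), (∫ y, h y ∂μ) = ∫ y, h (f y) ∂μ))) := by
  have key : ∀ (h : C(X, ℝ)) (L n : ℕ), ∫ y, h y ∂(ν L n) =
      (n : ℝ)⁻¹ * ∑ i ∈ E L n, h (f^[i] (x n)) := by
    intro h L n
    rw [hν, integral_smul_measure, integral_finsetSum_measure]
    · simp [integral_dirac]
    · intro i _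
      exact integrable_dirac (by simp)
  have hi : ∀ (h : C(X, ℝ)) (L n : ℕ), 1 ≤ L → 1 ≤ n →
        |(∫ y, h y ∂(ν L n)) - ∫ y, h (f y) ∂(ν L n)| ≤
          (((n : ℝ) / (L : ℝ) + 2) * 2 / (n : ℝ)) * ⨆ y : X, |h y| := by
    intro h L n hL hn
    have hb : BddAbove (Set.range fun y => |h y|) :=
      (isCompact_range (h.continuous.abs)).bddAbove
    have hM : ∀ y, |h y| ≤ ⨆ y : X, |h y| := fun y => le_ciSup hb y
    set M := ⨆ y : X, |h y| with hMdef
    have hM0 : 0 ≤ M := (abs_nonneg _).trans (hM (x 0))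
    obtain ⟨k, a, b, hk, hE, hd⟩ := hEint L n hL hn
    have h2 := key (h.comp ⟨f, hf⟩) L n
    simp only [ContinuousMap.comp_apply, ContinuousMap.coe_mk] at h2
    rw [key h, h2, ← mul_sub, ← Finset.sum_sub_distrib]
    have h3 := union_bound (fun i => h (f^[i] (x n))) M (fun i => hM _) (E L n) k a b hE hd
    simp only [Function.iterate_succ_apply'] at h3
    have hn0 : (0 : ℝ) < n := by exact_mod_cast hn
    rw [abs_mul, abs_of_pos (inv_pos.2 hn0)]
    calc (n : ℝ)⁻¹ * _ ≤ (n : ℝ)⁻¹ * (((n : ℝ) / L + 2) * (2 * M)) := by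
          refine mul_le_mul_of_nonneg_left (h3.trans ?_) (inv_pos.2 hn0).le
          exact mul_le_mul_of_nonneg_right hk (by positivity)
      _ = _ := by ring
  refine ⟨hi, fun νL _ hconv => ?_⟩
  have hii : ∀ (h : C(X, ℝ)) (L : ℕ), 1 ≤ L →
      |(∫ y, h y ∂(νL L)) - ∫ y, h (f y) ∂(νL L)| ≤ (2 / (L : ℝ)) * ⨆ y : X, |h y| := by
    intro h L hL
    have t := ((hconv L hL h).sub (hconv L hL (h.comp ⟨f, hf⟩))).abs
    have t2 : Tendsto (fun n : ℕ => (2 / (L : ℝ) + 4 / (n : ℝ)) * ⨆ y : X, |h y|) atTop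
        (nhds ((2 / (L : ℝ) + 0) * ⨆ y : X, |h y|)) :=
      (tendsto_const_nhds.add (tendsto_const_div_atTop_nhds_zero_nat 4)).mul_const _
    rw [add_zero] at t2
    refine le_of_tendsto_of_tendsto t t2 ?_
    filter_upwards [eventually_ge_atTop 1] with n hn
    refine (hi h L n hL hn).trans (le_of_eq ?_)
    have hn0 : (n : ℝ) ≠ 0 := by exact_mod_cast (by omega : n ≠ 0)
    have hL0 : (L : ℝ) ≠ 0 := by exact_mod_cast (by omega : L ≠ 0)
    congr 1
    field_simp
    ring
  refine ⟨hii, fun μ _ hμ h => ?_⟩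
  have t := ((hμ h).sub (hμ (h.comp ⟨f, hf⟩))).abs
  have t2 : Tendsto (fun L : ℕ => (2 / (L : ℝ)) * ⨆ y : X, |h y|) atTop
      (nhds (0 * ⨆ y : X, |h y|)) :=
    (tendsto_const_div_atTop_nhds_zero_nat 2).mul_const _
  rw [zero_mul] at t2
  have h0 := le_of_tendsto_of_tendsto t t2 (by
    filter_upwards [eventually_ge_atTop 1] with L hL
    exact hii h L hL)
  exact sub_eq_zero.1 (abs_nonpos_iff.1 h0)
end

section
/- Let X be a compact topological space, let μ be a finite Borel measure on X that is positive on every nonempty open set, and let (g_n)_{n≥1} be a sequence of continuous strictly positive functions g_n : X → ℝ. For a Borel set S ⊆ X define λ(S) := limsup_{n→∞} (1/n) log ∫_S g_n dμ (a value in [−∞, +∞]). Then there exists a point z ∈ X such that for every open neighborhood U of z, λ(U) = λ(X). -/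
open MeasureTheory Filter

/-- Existence of a point realizing the maximal local growth rate: if `μ` is a finite
Borel measure on a compact space `X` which is positive on nonempty open sets, and
`g n` are continuous strictly positive functions, then there is a point `z ∈ X` such
that for every open neighborhood `U` of `z`,
`limsup (1/n) log ∫_U g_n dμ = limsup (1/n) log ∫_X g_n dμ` (limsups in `[-∞,+∞]`). -/
theorem exists_maximal_point
    {X : Type*} [TopologicalSpace X] [CompactSpace X] [Nonempty X]
    [MeasurableSpace X] [BorelSpace X]
    (μ : Measure X) (hfin : IsFiniteMeasure μ)
    (hpos : ∀ U : Set X, IsOpen U → U.Nonempty → 0 < μ U)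
    (g : ℕ → X → ℝ) (hgc : ∀ n, Continuous (g n)) (hgpos : ∀ n x, 0 < g n x) :
    ∃ z : X, ∀ U : Set X, IsOpen U → z ∈ U →
      Filter.limsup (fun n : ℕ =>
          (((1 / (n : ℝ)) * Real.log (∫ x in U, g n x ∂μ) : ℝ) : EReal)) Filter.atTop =
        Filter.limsup (fun n : ℕ =>
          (((1 / (n : ℝ)) * Real.log (∫ x, g n x ∂μ) : ℝ) : EReal)) Filter.atTop := by
  have hint : ∀ n, Integrable (g n) μ := fun n => by
    obtain ⟨C, hC⟩ := (isCompact_range (hgc n)).isBounded.exists_norm_le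
    exact Integrable.of_bound (hgc n).measurable.aestronglyMeasurable C
      (ae_of_all _ fun x => hC _ ⟨x, rfl⟩)
  let I : Set X → ℕ → ENNReal := fun S n => ∫⁻ x in S, ENNReal.ofReal (g n x) ∂μ
  have key : ∀ U : Set X, IsOpen U → U.Nonempty →
      Filter.limsup (fun n : ℕ =>
          (((1 / (n : ℝ)) * Real.log (∫ x in U, g n x ∂μ) : ℝ) : EReal)) Filter.atTop =
        ExpGrowth.expGrowthSup (I U) := by
    intro U hU hne
    unfold ExpGrowth.expGrowthSup
    congr 1
    funext n
    have hp : 0 < ∫ x in U, g n x ∂μ := by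
      rw [setIntegral_pos_iff_support_of_nonneg_ae (ae_of_all _ fun x => (hgpos n x).le)
        (hint n).integrableOn]
      have : Function.support (g n) = Set.univ :=
        Set.eq_univ_of_forall fun x => (hgpos n x).ne'
      rw [this, Set.univ_inter]
      exact hpos U hU hne
    have hI : I U n = ENNReal.ofReal (∫ x in U, g n x ∂μ) :=
      (ofReal_integral_eq_lintegral_ofReal (hint n).integrableOn
        (ae_of_all _ fun x => (hgpos n x).le)).symm
    rw [hI, ENNReal.log_ofReal_of_pos hp, one_div, mul_comm, ← div_eq_mul_inv, EReal.coe_div]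
    rfl
  have keyU := key Set.univ isOpen_univ Set.univ_nonempty
  simp only [Measure.restrict_univ] at keyU
  by_contra! hcon
  choose U hUo hzU hUne using hcon
  have hlt : ∀ z, ExpGrowth.expGrowthSup (I (U z)) < ExpGrowth.expGrowthSup (I Set.univ) := by
    intro z
    refine lt_of_le_of_ne (ExpGrowth.expGrowthSup_monotone fun n =>
      lintegral_mono_set (Set.subset_univ _)) ?_
    rw [← keyU, ← key (U z) (hUo z) ⟨z, hzU z⟩]
    exact hUne z
  obtain ⟨t, ht⟩ := isCompact_univ.elim_finite_subcover U hUo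
    (fun z _ => Set.mem_iUnion.2 ⟨z, hzU z⟩)
  have hle : I Set.univ ≤ ∑ z ∈ t, I (U z) := by
    intro n
    rw [Finset.sum_apply]
    refine (lintegral_mono_set ht).trans ?_
    have h1 := lintegral_iUnion_le (μ := μ) (fun z : t => U z)
      (fun x => ENNReal.ofReal (g n x))
    rw [tsum_fintype, Finset.sum_coe_sort t
      (fun z => ∫⁻ x in U z, ENNReal.ofReal (g n x) ∂μ)] at h1
    rw [← Set.iUnion_subtype (fun z => z ∈ t) (fun z => U z.1)]
    exact h1
  have h := ExpGrowth.expGrowthSup_monotone hle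
  rw [ExpGrowth.expGrowthSup_sum] at h
  have hb : ⊥ < ExpGrowth.expGrowthSup (I Set.univ) :=
    lt_of_le_of_lt bot_le (hlt (Classical.arbitrary X))
  rw [← Finset.sup_eq_iSup] at h
  exact absurd h (not_le.2 ((Finset.sup_lt_iff hb).2 fun z _ => hlt z))
end

section
/- Let E be a real normed vector space, let R ≥ 1 be an integer, let 0 < ε ≤ 1/100, and let σ : ℝ → E be R times continuously differentiable with sup_{t∈[0,1]} ‖σ^{(s)}(t)‖ ≤ 1 for every 1 ≤ s ≤ R and ‖σ′(t)‖ ≥ 1/2 for all t ∈ [0,1]. Set N = ⌈1/ε⌉, δ = 1/N, and define affine maps θ_j : [0,1] → [0,1] by θ_j(t) = δt + b_j where b_j = (j−1)δ for 1 ≤ j < N and b_N = 1 − δ. Then the curves σ_j := σ ∘ θ_j (1 ≤ j ≤ N) satisfy: (i) σ([0,1]) = ⋃_{j=1}^{N} σ_j([0,1]); (ii) sup_{t∈[0,1]} ‖σ_j′(t)‖ ≤ ε for each j; and (iii) for every 2 ≤ s ≤ R, sup_{t∈[0,1]} ‖σ_j^{(s)}(t)‖ ≤ (1/6) · sup_{t∈[0,1]}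 ‖σ_j′(t)‖. In particular each σ_j is ε-bounded. -/
/-- Decomposition into `ε`-bounded curves: a `C^R` curve `σ` with all derivatives of
order `1 ≤ s ≤ R` bounded by `1` on `[0,1]` and `‖σ'‖ ≥ 1/2` on `[0,1]` is covered,
after the explicit affine reparametrizations `θ_j (t) = δ t + b_j`
(`N = ⌈1/ε⌉`, `δ = 1/N`, `b_j = (j-1)δ` for `1 ≤ j < N`, `b_N = 1 - δ`), by the
`N` curves `σ_j = σ ∘ θ_j`, each of which is `ε`-bounded:
`sup_{[0,1]} ‖σ_j'‖ ≤ ε` and `sup_{[0,1]} ‖σ_j^{(s)}‖ ≤ (1/6) sup_{[0,1]} ‖σ_j'‖`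
for `2 ≤ s ≤ R`. -/
theorem decomposition_into_bounded_curves
    {E : Type*} [NormedAddCommGroup E] [NormedSpace ℝ E]
    (R : ℕ) (hR : 1 ≤ R) (ε : ℝ) (hε0 : 0 < ε) (hε : ε ≤ 1 / 100)
    (σ : ℝ → E) (hσ : ContDiff ℝ (R : ℕ∞) σ)
    (hCr : ∀ s : ℕ, 1 ≤ s → s ≤ R →
      (⨆ t : Set.Icc (0 : ℝ) 1, ‖iteratedDeriv s σ t.1‖) ≤ 1)
    (hlow : ∀ t ∈ Set.Icc (0 : ℝ) 1, 1 / 2 ≤ ‖deriv σ t‖)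
    (N : ℕ) (hN : N = ⌈1 / ε⌉₊) (δ : ℝ) (hδ : δ = 1 / (N : ℝ))
    (b : ℕ → ℝ) (hb : ∀ j : ℕ, 1 ≤ j → j < N → b j = ((j : ℝ) - 1) * δ)
    (hbN : b N = 1 - δ) :
    -- (i) the images of the reparametrized curves cover the image of `σ`
    (σ '' Set.Icc (0 : ℝ) 1 =
      ⋃ j ∈ Finset.Icc 1 N, (fun t : ℝ => σ (δ * t + b j)) '' Set.Icc (0 : ℝ) 1) ∧
    -- (ii) first derivative bound
    (∀ j : ℕ, 1 ≤ j → j ≤ N →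
      (⨆ t : Set.Icc (0 : ℝ) 1, ‖deriv (fun u : ℝ => σ (δ * u + b j)) t.1‖) ≤ ε) ∧
    -- (iii) higher order derivative bounds
    (∀ j : ℕ, 1 ≤ j → j ≤ N → ∀ s : ℕ, 2 ≤ s → s ≤ R →
      (⨆ t : Set.Icc (0 : ℝ) 1, ‖iteratedDeriv s (fun u : ℝ => σ (δ * u + b j)) t.1‖) ≤
        (1 / 6) * ⨆ t : Set.Icc (0 : ℝ) 1, ‖deriv (fun u : ℝ => σ (δ * u + b j)) t.1‖) := by
  have hε1 : 100 ≤ 1 / ε := by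
    rw [le_div_iff₀ hε0]; linarith
  have hNε : 1 / ε ≤ (N : ℝ) := by rw [hN]; exact Nat.le_ceil _
  have hN100 : (100 : ℝ) ≤ N := hε1.trans hNε
  have hN0 : (0 : ℝ) < N := by linarith
  have hN1 : 1 ≤ N := by exact_mod_cast (by linarith : (1 : ℝ) ≤ N)
  have hδ0 : 0 < δ := by rw [hδ]; positivity
  have hNδ : (N : ℝ) * δ = 1 := by rw [hδ]; field_simp
  have hδε : δ ≤ ε := by
    rw [hδ, div_le_iff₀ hN0]
    rw [div_le_iff₀ hε0] at hNε
    linarith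
  have hbj : ∀ j : ℕ, 1 ≤ j → j ≤ N → b j = ((j : ℝ) - 1) * δ := by
    intro j h1 h2
    rcases h2.lt_or_eq with h | h
    · exact hb j h1 h
    · subst h; rw [hbN]; linarith
  have hmem : ∀ j : ℕ, 1 ≤ j → j ≤ N → ∀ t ∈ Set.Icc (0 : ℝ) 1,
      δ * t + b j ∈ Set.Icc (0 : ℝ) 1 := by
    intro j h1 h2 t ht
    rw [hbj j h1 h2]
    have h1' : (1 : ℝ) ≤ j := by exact_mod_cast h1
    have h2' : (j : ℝ) ≤ N := by exact_mod_cast h2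
    have a1 : 0 ≤ δ * t := mul_nonneg hδ0.le ht.1
    have a2 : δ * t ≤ δ * 1 := mul_le_mul_of_nonneg_left ht.2 hδ0.le
    have a3 : 0 ≤ ((j : ℝ) - 1) * δ := mul_nonneg (by linarith) hδ0.le
    have a4 : (j : ℝ) * δ ≤ N * δ := mul_le_mul_of_nonneg_right h2' hδ0.le
    exact ⟨by linarith, by linarith⟩
  have hpt : ∀ s : ℕ, 1 ≤ s → s ≤ R → ∀ t ∈ Set.Icc (0 : ℝ) 1,
      ‖iteratedDeriv s σ t‖ ≤ 1 := by
    intro s h1 h2 t ht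
    have hc : Continuous fun x => ‖iteratedDeriv s σ x‖ :=
      (hσ.continuous_iteratedDeriv s (by exact_mod_cast h2)).norm
    have hbd : BddAbove (Set.range fun t : Set.Icc (0 : ℝ) 1 => ‖iteratedDeriv s σ t.1‖) :=
      isCompact_range (hc.comp continuous_subtype_val) |>.bddAbove
    exact (le_ciSup hbd ⟨t, ht⟩).trans (hCr s h1 h2)
  have hder : ∀ s : ℕ, s ≤ R → ∀ c t : ℝ,
      iteratedDeriv s (fun u : ℝ => σ (δ * u + c)) t = δ ^ s • iteratedDeriv s σ (δ * t + c) := by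
    intro s hs c t
    have hσs : ContDiff ℝ s (fun z => σ (z + c)) :=
      (hσ.of_le (by exact_mod_cast hs)).comp (contDiff_id.add contDiff_const)
    have h := congrFun (iteratedDeriv_comp_const_smul hσs δ) t
    rw [h, iteratedDeriv_comp_add_const]
  have hder1 : ∀ c t : ℝ,
      deriv (fun u : ℝ => σ (δ * u + c)) t = δ • deriv σ (δ * t + c) := by
    intro c t
    have h := hder 1 hR c t
    simpa only [iteratedDeriv_one, pow_one] using h
  have hup : ∀ j : ℕ, 1 ≤ j → j ≤ N → ∀ t : Set.Icc (0 : ℝ) 1,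
      ‖deriv (fun u : ℝ => σ (δ * u + b j)) t.1‖ ≤ δ := by
    intro j h1 h2 t
    have h := hpt 1 le_rfl hR _ (hmem j h1 h2 t.1 t.2)
    rw [iteratedDeriv_one] at h
    rw [hder1, norm_smul, Real.norm_of_nonneg hδ0.le]
    exact mul_le_of_le_one_right hδ0.le h
  have : Nonempty (Set.Icc (0 : ℝ) 1) := ⟨⟨0, by simp⟩⟩
  refine ⟨?_, ?_, ?_⟩
  · ext y
    simp only [Set.mem_iUnion, Set.mem_image, Finset.mem_Icc, exists_prop]
    constructor
    · rintro ⟨t, ht, rfl⟩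
      rcases ht.2.lt_or_eq with h | h
      · have hf1 := Nat.floor_le (mul_nonneg hN0.le ht.1)
        have hf2 := Nat.lt_floor_add_one ((N : ℝ) * t)
        have hlt : ⌊(N : ℝ) * t⌋₊ < N := by
          rw [Nat.floor_lt (mul_nonneg hN0.le ht.1)]
          nlinarith
        refine ⟨⌊(N : ℝ) * t⌋₊ + 1, ⟨by omega, by omega⟩,
          N * t - ⌊(N : ℝ) * t⌋₊, ⟨by linarith, by linarith⟩, ?_⟩
        rw [hbj _ (by omega) (by omega)]
        congr 1
        push_cast
        linear_combination t * hNδ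
      · refine ⟨N, ⟨hN1, le_rfl⟩, 1, ⟨by norm_num, le_rfl⟩, ?_⟩
        rw [hbN, h]
        congr 1
        ring
    · rintro ⟨j, ⟨h1, h2⟩, t, ht, rfl⟩
      exact ⟨_, hmem j h1 h2 t ht, rfl⟩
  · intro j h1 h2
    exact ciSup_le fun t => (hup j h1 h2 t).trans hδε
  · intro j h1 h2 s hs hsR
    have hbd : BddAbove (Set.range fun t : Set.Icc (0 : ℝ) 1 =>
        ‖deriv (fun u : ℝ => σ (δ * u + b j)) t.1‖) := by
      refine ⟨δ, ?_⟩
      rintro _ ⟨t, rfl⟩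
      exact hup j h1 h2 t
    have hlo : δ / 2 ≤ ⨆ t : Set.Icc (0 : ℝ) 1,
        ‖deriv (fun u : ℝ => σ (δ * u + b j)) t.1‖ := by
      refine le_trans ?_ (le_ciSup hbd ⟨0, by simp⟩)
      have h := hlow _ (hmem j h1 h2 0 (by simp))
      rw [hder1, norm_smul, Real.norm_of_nonneg hδ0.le]
      nlinarith
    refine ciSup_le fun t => ?_
    have h := hpt s (by omega) hsR _ (hmem j h1 h2 t.1 t.2)
    rw [hder s hsR, norm_smul, Real.norm_of_nonneg (pow_nonneg hδ0.le s)]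
    have hp : δ ^ s ≤ δ ^ 2 := pow_le_pow_of_le_one hδ0.le (by linarith) hs
    have hm : δ ^ s * ‖iteratedDeriv s σ (δ * t.1 + b j)‖ ≤ δ ^ s :=
      mul_le_of_le_one_right (pow_nonneg hδ0.le s) h
    have h100 : δ ^ 2 ≤ δ * (1 / 100) := by nlinarith
    linarith
end

section
/- For all real numbers a > 0, b > 0 and every n ∈ ℕ, ∫_0^b u³ |cos(aⁿ/u)| du ≥ a^{4n} b⁴ / (2π (aⁿ + 2πb)⁴). -/
lemma aux_abs_cos_int (T : ℝ) : ∫ t in T..(T + Real.pi), |Real.cos t| = 2 := by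
  have hp : Function.Periodic (fun t => |Real.cos t|) Real.pi := by
    intro t
    simp [Real.cos_add_pi]
  rw [hp.intervalIntegral_add_eq T (-(Real.pi / 2))]
  have h : ∫ t in (-(Real.pi / 2))..(-(Real.pi / 2) + Real.pi), |Real.cos t|
      = ∫ t in (-(Real.pi / 2))..(-(Real.pi / 2) + Real.pi), Real.cos t := by
    apply intervalIntegral.integral_congr
    intro t ht
    rw [Set.uIcc_of_le (by linarith [Real.pi_pos])] at ht
    exact abs_of_nonneg (Real.cos_nonneg_of_mem_Icc ⟨ht.1, by linarith [ht.2]⟩)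
  rw [h, integral_cos]
  have : -(Real.pi / 2) + Real.pi = Real.pi / 2 := by ring
  rw [this, Real.sin_neg, Real.sin_pi_div_two]
  norm_num

lemma aux_contOn {T S : ℝ} (hT : 0 < T) (hS : T ≤ S) :
    ContinuousOn (fun t : ℝ => (t ^ 5)⁻¹ * |Real.cos t|) (Set.uIcc T S) := by
  rw [Set.uIcc_of_le hS]
  apply ContinuousOn.mul
  · apply ContinuousOn.inv₀ (by fun_prop)
    intro t ht
    have : 0 < t := lt_of_lt_of_le hT ht.1
    positivity
  · fun_prop

lemma aux_alg {x p : ℝ} (hx : 0 < x) (hp : 0 < p) :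
    1 / (2 * p * x ^ 4) - 1 / (2 * p * (x + p) ^ 4) ≤ (x ^ 5)⁻¹ * 2 := by
  have h : (x ^ 5)⁻¹ * 2 - (1 / (2 * p * x ^ 4) - 1 / (2 * p * (x + p) ^ 4))
      = (10 * x ^ 3 * p ^ 2 + 20 * x ^ 2 * p ^ 3 + 15 * x * p ^ 4 + 4 * p ^ 5)
        / (2 * p * x ^ 5 * (x + p) ^ 4) := by
    field_simp
    ring
  have h2 : 0 ≤ (10 * x ^ 3 * p ^ 2 + 20 * x ^ 2 * p ^ 3 + 15 * x * p ^ 4 + 4 * p ^ 5)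
        / (2 * p * x ^ 5 * (x + p) ^ 4) := by positivity
  linarith

lemma aux_step {T : ℝ} (hT : 0 < T) :
    ((T + Real.pi) ^ 5)⁻¹ * 2 ≤ ∫ t in T..(T + Real.pi), (t ^ 5)⁻¹ * |Real.cos t| := by
  have hpi := Real.pi_pos
  rw [← aux_abs_cos_int T, ← intervalIntegral.integral_const_mul]
  apply intervalIntegral.integral_mono_on (by linarith)
  · apply Continuous.intervalIntegrable
    fun_prop
  · exact (aux_contOn hT (by linarith)).intervalIntegrable
  · intro t ht
    have : 0 < t := lt_of_lt_of_le hT ht.1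
    have h2 := ht.2
    gcongr

lemma aux_sum {T : ℝ} (hT : 0 < T) (N : ℕ) :
    1 / (2 * Real.pi * (T + Real.pi) ^ 4)
      - 1 / (2 * Real.pi * (T + N * Real.pi + Real.pi) ^ 4)
      ≤ ∫ t in T..(T + N * Real.pi), (t ^ 5)⁻¹ * |Real.cos t| := by
  have hpi := Real.pi_pos
  induction N with
  | zero => simp
  | succ N ih =>
    have hN : 0 ≤ (N : ℝ) * Real.pi := by positivity
    have hpos : 0 < T + N * Real.pi := by positivity
    have h1 := aux_step hpos
    have h2 := aux_alg (x := T + N * Real.pi + Real.pi) (by positivity) hpi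
    have e : T + ((N + 1 : ℕ) : ℝ) * Real.pi = T + N * Real.pi + Real.pi := by
      push_cast; ring
    rw [e, ← intervalIntegral.integral_add_adjacent_intervals (b := T + N * Real.pi)
      (aux_contOn hT (by linarith)).intervalIntegrable
      (aux_contOn hpos (by linarith)).intervalIntegrable]
    linarith

lemma aux_cov {T S c : ℝ} (hc : 0 < c) (hT : 0 < T) (hS : T ≤ S) :
    ∫ u in (c / S)..(c / T), u ^ 3 * |Real.cos (c / u)|
      = c ^ 4 * ∫ t in T..S, (t ^ 5)⁻¹ * |Real.cos t| := by
  have key := intervalIntegral.integral_comp_mul_deriv'' (a := T) (b := S)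
    (f := fun t => c / t) (f' := fun t => -c / t ^ 2)
    (g := fun u => u ^ 3 * |Real.cos (c / u)|) ?_ ?_ ?_ ?_
  · rw [intervalIntegral.integral_symm, ← key, ← intervalIntegral.integral_neg,
      ← intervalIntegral.integral_const_mul]
    apply intervalIntegral.integral_congr
    intro t ht
    rw [Set.uIcc_of_le hS] at ht
    have : 0 < t := lt_of_lt_of_le hT ht.1
    have e : c / (c / t) = t := by field_simp
    simp only [Function.comp, e]
    field_simp
  · rw [Set.uIcc_of_le hS]
    apply ContinuousOn.div (by fun_prop) (by fun_prop)
    intro t ht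
    exact (lt_of_lt_of_le hT ht.1).ne'
  · intro t ht
    rw [min_eq_left hS] at ht
    have ht0 : t ≠ 0 := (hT.trans ht.1).ne'
    have := ((hasDerivAt_inv ht0).const_mul c).hasDerivWithinAt (s := Set.Ioi t)
    have e : -c / t ^ 2 = c * -(t ^ 2)⁻¹ := by
      field_simp
    simp only [e, div_eq_mul_inv c]
    exact this
  · rw [Set.uIcc_of_le hS]
    apply ContinuousOn.div (by fun_prop) (by fun_prop)
    intro t ht
    exact pow_ne_zero _ (lt_of_lt_of_le hT ht.1).ne'
  · rintro u ⟨t, ht, rfl⟩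
    rw [Set.uIcc_of_le hS] at ht
    have ht0 : 0 < t := lt_of_lt_of_le hT ht.1
    have h0 : c / t ≠ 0 := by positivity
    apply ContinuousAt.continuousWithinAt
    have : ContinuousAt (fun u : ℝ => c / u) (c / t) := continuousAt_const.div continuousAt_id h0
    have h2 : ContinuousAt (fun u : ℝ => Real.cos (c / u)) (c / t) :=
      Real.continuous_cos.continuousAt.comp this
    exact (continuousAt_id.pow 3).mul h2.abs

lemma aux_integrable (c b : ℝ) :
    MeasureTheory.IntegrableOn (fun u : ℝ => u ^ 3 * |Real.cos (c / u)|) (Set.Ioc 0 b) := by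
  refine MeasureTheory.Measure.integrableOn_of_bounded (M := b ^ 3) ?_ ?_ ?_
  · simp
  · apply Measurable.aestronglyMeasurable
    fun_prop
  · refine (MeasureTheory.ae_restrict_iff' measurableSet_Ioc).2 (Filter.Eventually.of_forall ?_)
    intro u hu
    have h0 := hu.1
    have h1 := hu.2
    have h2 := Real.abs_cos_le_one (c / u)
    rw [Real.norm_eq_abs, abs_of_nonneg (by positivity)]
    calc u ^ 3 * |Real.cos (c / u)| ≤ u ^ 3 * 1 := by gcongr
      _ ≤ b ^ 3 := by rw [mul_one]; gcongr

lemma aux_main {b c : ℝ} (hb : 0 < b) (hc : 0 < c) (N : ℕ) :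
    c ^ 4 * (1 / (2 * Real.pi * (c / b + Real.pi) ^ 4)
      - 1 / (2 * Real.pi * (c / b + N * Real.pi + Real.pi) ^ 4)) ≤
      ∫ u in Set.Ioc (0 : ℝ) b, u ^ 3 * |Real.cos (c / u)| := by
  have hpi := Real.pi_pos
  have hT : 0 < c / b := by positivity
  have hS : c / b ≤ c / b + N * Real.pi := by
    have : 0 ≤ (N : ℝ) * Real.pi := by positivity
    linarith
  have hS0 : 0 < c / (c / b + N * Real.pi) := by positivity
  have e : c / (c / b) = b := by field_simp
  have hle : c / (c / b + N * Real.pi) ≤ b := by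
    calc _ ≤ c / (c / b) := by gcongr
      _ = b := e
  have h1 := aux_cov hc hT hS
  rw [e, intervalIntegral.integral_of_le hle] at h1
  calc _ ≤ c ^ 4 * ∫ t in (c / b)..(c / b + N * Real.pi), (t ^ 5)⁻¹ * |Real.cos t| := by
        gcongr
        exact aux_sum hT N
    _ = _ := h1.symm
    _ ≤ _ := by
        apply MeasureTheory.setIntegral_mono_set (aux_integrable c b)
        · refine (MeasureTheory.ae_restrict_iff' measurableSet_Ioc).2
            (Filter.Eventually.of_forall ?_)
          intro u hu
          have h0 := hu.1
          simp only [Pi.zero_apply]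
          positivity
        · exact (Set.Ioc_subset_Ioc_left hS0.le).eventuallyLE

/-- For all `a, b > 0` and `n ∈ ℕ`,
`∫_0^b u³ |cos(aⁿ/u)| du ≥ a^{4n} b⁴ / (2π (aⁿ + 2πb)⁴)`,
the integral being the Lebesgue integral over `(0, b]`. -/
theorem integral_cube_abs_cos_lower_bound (a b : ℝ) (ha : 0 < a) (hb : 0 < b) (n : ℕ) :
    a ^ (4 * n) * b ^ 4 / (2 * Real.pi * (a ^ n + 2 * Real.pi * b) ^ 4) ≤
      ∫ u in Set.Ioc (0 : ℝ) b, u ^ 3 * |Real.cos (a ^ n / u)| := by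
  have hc : 0 < a ^ n := by positivity
  rw [mul_comm 4 n, pow_mul]
  generalize a ^ n = c at hc ⊢
  have hpi := Real.pi_pos
  have hlim : Filter.Tendsto (fun N : ℕ => c ^ 4 * (1 / (2 * Real.pi * (c / b + Real.pi) ^ 4)
      - 1 / (2 * Real.pi * (c / b + N * Real.pi + Real.pi) ^ 4))) Filter.atTop
      (nhds (c ^ 4 * (1 / (2 * Real.pi * (c / b + Real.pi) ^ 4) - 0))) := by
    apply Filter.Tendsto.const_mul
    apply Filter.Tendsto.const_sub
    apply Filter.Tendsto.div_atTop tendsto_const_nhds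
    apply Filter.Tendsto.const_mul_atTop (by positivity)
    apply (Filter.tendsto_pow_atTop (by norm_num)).comp
    apply Filter.tendsto_atTop_add_const_right
    apply Filter.tendsto_atTop_add_const_left
    exact tendsto_natCast_atTop_atTop.atTop_mul_const hpi
  have hfin := le_of_tendsto' hlim (aux_main hb hc)
  refine le_trans ?_ hfin
  have e : c ^ 4 * (1 / (2 * Real.pi * (c / b + Real.pi) ^ 4) - 0)
      = c ^ 4 * b ^ 4 / (2 * Real.pi * (c + Real.pi * b) ^ 4) := by
    field_simp
    ring
  rw [e]
  gcongr
  linarith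
end

section
/- Fix a real number a with a ≥ 3^{1/4}. Then limsup_{n→∞} (1/n) log Lₙ = 0. -/
/-- Case `a ≥ 3^{1/4}` of the example: with
`gₙ(u) = 3ⁿ a^{-5n} u⁵ sin(aⁿ/u)` (and `gₙ(0) = 0`),
`Iₙ = {u ∈ [0,1] : |gₙ(u)| ≤ 1}` and
`Lₙ = ∫_{Iₙ} √(1 + gₙ'(u)²) du`, one has `limsup (1/n) log Lₙ = 0`. -/
theorem repeller_volume_growth_case_large (a : ℝ) (ha : (3 : ℝ) ^ ((1 : ℝ) / 4) ≤ a)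
    (g : ℕ → ℝ → ℝ)
    (hg : ∀ (n : ℕ) (u : ℝ), u ≠ 0 →
      g n u = 3 ^ n * (a ^ (5 * n))⁻¹ * u ^ 5 * Real.sin (a ^ n / u))
    (hg0 : ∀ n : ℕ, g n 0 = 0)
    (L : ℕ → ℝ)
    (hL : ∀ n : ℕ, L n =
      ∫ u in {u : ℝ | u ∈ Set.Icc (0 : ℝ) 1 ∧ |g n u| ≤ 1},
        Real.sqrt (1 + (deriv (g n) u) ^ 2)) :
    Filter.limsup (fun n : ℕ =>
        (((1 / (n : ℝ)) * Real.log (L n) : ℝ) : EReal)) Filter.atTop = 0 := by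
  have ha0 : 0 < a := lt_of_lt_of_le (by positivity) ha
  have h4 : (3 : ℝ) ≤ a ^ 4 := by
    have h := pow_le_pow_left₀ (by positivity) ha 4
    rw [← Real.rpow_natCast, ← Real.rpow_mul (by norm_num)] at h
    norm_num at h
    exact h
  have ha1 : 1 ≤ a := by
    by_contra hlt
    push Not at hlt
    have := pow_le_one₀ (n := 4) ha0.le hlt.le
    linarith
  have hbound : ∀ n, 1 ≤ L n ∧ L n ≤ 7 := by
    intro n
    set A := a ^ n with hA
    have hA1 : 1 ≤ A := one_le_pow₀ ha1
    have hA0 : 0 < A := by linarith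
    set c := (3 : ℝ) ^ n * (a ^ (5 * n))⁻¹ with hc
    have hc0 : 0 < c := by positivity
    have hcA : c * A ≤ 1 := by
      have h5 : a ^ (5 * n) = A ^ 4 * A := by
        rw [hA, ← pow_mul, ← pow_add]; congr 1; ring
      have h3 : (3 : ℝ) ^ n ≤ A ^ 4 := by
        have := pow_le_pow_left₀ (by norm_num) h4 n
        rwa [← pow_mul, mul_comm, pow_mul] at this
      rw [hc, h5]
      have : (3 : ℝ) ^ n * (A ^ 4 * A)⁻¹ * A = 3 ^ n / A ^ 4 := by field_simp
      rw [this]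
      exact (div_le_one (by positivity)).2 h3
    have hc1 : c ≤ 1 := by nlinarith
    have hset : {u : ℝ | u ∈ Set.Icc (0 : ℝ) 1 ∧ |g n u| ≤ 1} = Set.Icc (0 : ℝ) 1 := by
      ext u
      simp only [Set.mem_ofPred_eq, and_iff_left_iff_imp]
      intro hu
      by_cases h0 : u = 0
      · simp [h0, hg0]
      · rw [hg n u h0, abs_mul, abs_mul, abs_of_pos hc0, abs_of_nonneg (pow_nonneg hu.1 5)]
        have h1 : u ^ 5 ≤ 1 := pow_le_one₀ hu.1 hu.2
        have h2 := Real.abs_sin_le_one (A / u)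
        have h3 : c * u ^ 5 ≤ 1 := mul_le_one₀ hc1 (pow_nonneg hu.1 5) h1
        exact mul_le_one₀ h3 (abs_nonneg _) h2
    have hd : ∀ u ∈ Set.Ioc (0 : ℝ) 1, |deriv (g n) u| ≤ 6 := by
      intro u hu
      have hu0 : u ≠ 0 := hu.1.ne'
      have he : g n =ᶠ[nhds u] fun u => c * u ^ 5 * Real.sin (A / u) := by
        filter_upwards [isOpen_ne.mem_nhds hu0] with v hv
        exact hg n v hv
      have hder : HasDerivAt (fun u : ℝ => c * u ^ 5 * Real.sin (A / u))
          (c * (5 * u ^ 4) * Real.sin (A / u)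
            + c * u ^ 5 * (Real.cos (A / u) * (A * (-(u ^ 2)⁻¹)))) u := by
        have h1 := ((hasDerivAt_pow 5 u).const_mul c)
        have h2 := ((hasDerivAt_inv hu0).const_mul A).sin
        simp only [← div_eq_mul_inv] at h2
        have := h1.mul h2
        norm_num only at this
        exact this
      rw [he.deriv_eq, hder.deriv]
      have e2 : c * u ^ 5 * (Real.cos (A / u) * (A * (-(u ^ 2)⁻¹)))
          = - ((c * A) * u ^ 3 * Real.cos (A / u)) := by
        field_simp
      rw [e2]
      refine (abs_add_le _ _).trans ?_
      rw [abs_neg, abs_mul, abs_mul (c * A * u ^ 3)]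
      have hu1 := hu.1.le
      have p4 : u ^ 4 ≤ 1 := pow_le_one₀ hu1 hu.2
      have p3 : u ^ 3 ≤ 1 := pow_le_one₀ hu1 hu.2
      have s := Real.abs_sin_le_one (A / u)
      have t := Real.abs_cos_le_one (A / u)
      have q4 : 0 ≤ u ^ 4 := by positivity
      have q3 : 0 ≤ u ^ 3 := by positivity
      rw [abs_of_nonneg (by positivity : 0 ≤ c * (5 * u ^ 4)),
        abs_of_nonneg (by positivity : 0 ≤ c * A * u ^ 3)]
      have r4 : c * u ^ 4 * |Real.sin (A / u)| ≤ 1 :=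
        mul_le_one₀ (mul_le_one₀ hc1 q4 p4) (abs_nonneg _) s
      have r3 : c * A * u ^ 3 * |Real.cos (A / u)| ≤ 1 :=
        mul_le_one₀ (mul_le_one₀ hcA q3 p3) (abs_nonneg _) t
      linarith
    have hup : ∀ u ∈ Set.Ioc (0 : ℝ) 1, Real.sqrt (1 + (deriv (g n) u) ^ 2) ≤ 7 := by
      intro u hu
      have h := abs_le.1 (hd u hu)
      apply Real.sqrt_le_iff.2
      constructor
      · norm_num
      · nlinarith [h.1, h.2]
    have hlo : ∀ u : ℝ, 1 ≤ Real.sqrt (1 + (deriv (g n) u) ^ 2) := by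
      intro u
      apply Real.one_le_sqrt.2
      nlinarith [sq_nonneg (deriv (g n) u)]
    have hint : MeasureTheory.IntegrableOn (fun u => Real.sqrt (1 + (deriv (g n) u) ^ 2))
        (Set.Ioc (0 : ℝ) 1) := by
      refine MeasureTheory.Measure.integrableOn_of_bounded (M := 7) (by simp) ?_ ?_
      · exact (((measurable_deriv (g n)).pow_const 2).const_add 1).sqrt.aestronglyMeasurable
      · filter_upwards [MeasureTheory.ae_restrict_mem measurableSet_Ioc] with u hu
        rw [Real.norm_of_nonneg (Real.sqrt_nonneg _)]
        exact hup u hu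
    rw [hL n, hset, MeasureTheory.integral_Icc_eq_integral_Ioc]
    have hk : ∀ k : ℝ, ∫ _ in Set.Ioc (0 : ℝ) 1, k = k := by intro k; simp
    have hki : ∀ k : ℝ, MeasureTheory.IntegrableOn (fun _ => k) (Set.Ioc (0 : ℝ) 1) := by
      intro k; simp
    constructor
    · have := MeasureTheory.setIntegral_mono_on (hki 1) hint measurableSet_Ioc
        (fun u _ => hlo u)
      rwa [hk] at this
    · have := MeasureTheory.setIntegral_mono_on hint (hki 7) measurableSet_Ioc hup
      rwa [hk] at this
  have hlim : Filter.Tendsto (fun n : ℕ => (1 / (n : ℝ)) * Real.log (L n)) Filter.atTop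
      (nhds 0) := by
    have h1 : Filter.Tendsto (fun n : ℕ => (1 / (n : ℝ)) * Real.log 7) Filter.atTop
        (nhds 0) := by
      simpa using tendsto_one_div_atTop_nhds_zero_nat.mul_const (Real.log 7)
    refine squeeze_zero (fun n => ?_) (fun n => ?_) h1
    · exact mul_nonneg (by positivity) (Real.log_nonneg (hbound n).1)
    · exact mul_le_mul_of_nonneg_left
        (Real.log_le_log (by linarith [(hbound n).1]) (hbound n).2) (by positivity)
  exact ((continuous_coe_real_ereal.tendsto 0).comp hlim).limsup_eq
end

section
/- Fix a real number a with 3^{1/5} < a < 3^{1/4}. Then limsup_{n→∞} (1/n) log Lₙ = log 3 − 4 log a. -/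
open MeasureTheory Filter Set in
theorem repeller_aux_bounds (c M : ℝ) (hc0 : 0 < c) (hc1 : c ≤ 1) (hM : 1 ≤ M) (hcM : 1 ≤ c * M)
    (g : ℝ → ℝ) (hg : ∀ u : ℝ, u ≠ 0 → g u = c * u ^ 5 * Real.sin (M / u)) (hg0 : g 0 = 0) :
    (∫ u in {u : ℝ | u ∈ Set.Icc (0 : ℝ) 1 ∧ |g u| ≤ 1}, Real.sqrt (1 + (deriv g u) ^ 2))
      ≤ 7 * (c * M) ∧
    (100 ≤ M → c * M / 16 ≤
      ∫ u in {u : ℝ | u ∈ Set.Icc (0 : ℝ) 1 ∧ |g u| ≤ 1}, Real.sqrt (1 + (deriv g u) ^ 2)) := by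
  have hset : {u : ℝ | u ∈ Set.Icc (0 : ℝ) 1 ∧ |g u| ≤ 1} = Set.Icc (0 : ℝ) 1 := by
    ext u
    simp only [Set.mem_setOf_eq, and_iff_left_iff_imp]
    intro hu
    by_cases h0 : u = 0
    · simp [h0, hg0]
    · rw [hg u h0, abs_mul, abs_mul, abs_of_pos hc0, abs_of_nonneg (pow_nonneg hu.1 5)]
      have h1 : u ^ 5 ≤ 1 := pow_le_one₀ hu.1 hu.2
      have h2 := Real.abs_sin_le_one (M / u)
      have h3 : c * u ^ 5 ≤ 1 := mul_le_one₀ hc1 (pow_nonneg hu.1 5) h1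
      exact mul_le_one₀ h3 (abs_nonneg _) h2
  rw [hset]
  have hder : ∀ u : ℝ, u ≠ 0 → deriv g u =
      c * (5 * u ^ 4 * Real.sin (M / u) - M * u ^ 3 * Real.cos (M / u)) := by
    intro u hu
    have heq : g =ᶠ[nhds u] fun u => c * u ^ 5 * Real.sin (M / u) := by
      filter_upwards [isOpen_ne.mem_nhds hu] with v hv using hg v hv
    rw [heq.deriv_eq]
    have h1 : HasDerivAt (fun u : ℝ => M / u) (-M / u ^ 2) u := by
      have := (hasDerivAt_inv hu).const_mul M
      refine HasDerivAt.congr_deriv this ?_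
      ring
    have h2 := ((hasDerivAt_pow 5 u).const_mul c).mul h1.sin
    refine (HasDerivAt.congr_deriv h2 ?_).deriv
    push_cast
    field_simp
    ring
  have hbound : ∀ u ∈ Set.Icc (0 : ℝ) 1, u ≠ 0 → Real.sqrt (1 + (deriv g u) ^ 2) ≤ 7 * (c * M) := by
    intro u hu h0
    have hd : |deriv g u| ≤ 6 * (c * M) := by
      rw [hder u h0, abs_mul, abs_of_pos hc0]
      have h4 : u ^ 4 ≤ 1 := pow_le_one₀ hu.1 hu.2
      have h3 : u ^ 3 ≤ 1 := pow_le_one₀ hu.1 hu.2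
      have hs := Real.abs_sin_le_one (M / u)
      have hk := Real.abs_cos_le_one (M / u)
      have e1 : |5 * u ^ 4 * Real.sin (M / u)| ≤ 5 := by
        rw [abs_mul, abs_of_nonneg (by have := hu.1; positivity)]
        nlinarith [pow_nonneg hu.1 4, abs_nonneg (Real.sin (M / u))]
      have e2 : |M * u ^ 3 * Real.cos (M / u)| ≤ M := by
        rw [abs_mul, abs_of_nonneg (by have := hu.1; positivity), mul_assoc]
        have : u ^ 3 * |Real.cos (M / u)| ≤ 1 := mul_le_one₀ h3 (abs_nonneg _) hk
        nlinarith
      have e3 := abs_sub (5 * u ^ 4 * Real.sin (M / u)) (M * u ^ 3 * Real.cos (M / u))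
      nlinarith
    rw [Real.sqrt_le_left (by positivity)]
    have := sq_le_sq' (by linarith [neg_abs_le (deriv g u)]) ((le_abs_self _).trans hd)
    nlinarith
  have hae : ∀ᵐ u ∂(volume.restrict (Set.Icc (0 : ℝ) 1)),
      ‖Real.sqrt (1 + (deriv g u) ^ 2)‖ ≤ 7 * (c * M) := by
    have hn : ∀ᵐ u : ℝ ∂(volume.restrict (Set.Icc (0 : ℝ) 1)), u ≠ 0 :=
      ae_restrict_of_ae (by simp [ae_iff])
    filter_upwards [hn, ae_restrict_mem measurableSet_Icc] with u h0 hu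
    rw [Real.norm_of_nonneg (Real.sqrt_nonneg _)]
    exact hbound u hu h0
  have hmeas : Measurable (fun u => Real.sqrt (1 + (deriv g u) ^ 2)) := by
    have := measurable_deriv g
    fun_prop
  have hint : IntegrableOn (fun u => Real.sqrt (1 + (deriv g u) ^ 2)) (Set.Icc (0 : ℝ) 1) :=
    Measure.integrableOn_of_bounded (by simp) hmeas.aestronglyMeasurable hae
  refine ⟨?_, fun hM' => ?_⟩
  · have := norm_setIntegral_le_of_norm_le_const_ae' (μ := volume) (s := Set.Icc (0 : ℝ) 1)
      (f := fun u => Real.sqrt (1 + (deriv g u) ^ 2)) (C := 7 * (c * M)) (by simp)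
      ((ae_restrict_iff' measurableSet_Icc).1 hae)
    have h2 := (le_abs_self _).trans this
    simpa using h2
  · have hsub : Set.Icc (1 / 2 : ℝ) 1 ⊆ Set.Icc 0 1 := Set.Icc_subset_Icc (by norm_num) le_rfl
    have hmono := setIntegral_mono_set hint
      (ae_of_all _ fun u => Real.sqrt_nonneg (1 + (deriv g u) ^ 2)) hsub.eventuallyLE
    refine le_trans ?_ hmono
    have hG : ∀ u : ℝ, u ≠ 0 → HasDerivAt
        (fun u => c * (M * u ^ 4 / 8 - u ^ 5 * Real.sin (2 * M / u) / 4 - 7 * u))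
        (c * (M * u ^ 3 / 2 - 5 * u ^ 4 * Real.sin (2 * M / u) / 4
          + M * u ^ 3 * Real.cos (2 * M / u) / 2 - 7)) u := by
      intro u hu
      have h1 : HasDerivAt (fun u : ℝ => 2 * M / u) (-(2 * M) / u ^ 2) u := by
        have := (hasDerivAt_inv hu).const_mul (2 * M)
        refine HasDerivAt.congr_deriv this ?_
        ring
      have h2 := ((((((hasDerivAt_pow 4 u).const_mul M).div_const 8).sub
        (((hasDerivAt_pow 5 u).mul h1.sin).div_const 4)).sub
        ((hasDerivAt_id u).const_mul 7)).const_mul c)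
      refine HasDerivAt.congr_deriv h2 ?_
      push_cast
      field_simp
      ring
    have key := intervalIntegral.sub_le_integral_of_hasDeriv_right_of_le
      (a := (1 / 2 : ℝ)) (b := 1) (by norm_num)
      (g := fun u => c * (M * u ^ 4 / 8 - u ^ 5 * Real.sin (2 * M / u) / 4 - 7 * u))
      (g' := fun u => c * (M * u ^ 3 / 2 - 5 * u ^ 4 * Real.sin (2 * M / u) / 4
          + M * u ^ 3 * Real.cos (2 * M / u) / 2 - 7))
      (φ := fun u => Real.sqrt (1 + (deriv g u) ^ 2))
      (fun u hu => (hG u (by linarith [hu.1] : (0:ℝ) < u).ne').continuousAt.continuousWithinAt)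
      (fun u hu => (hG u (by linarith [hu.1] : (0:ℝ) < u).ne').hasDerivWithinAt)
      (hint.mono_set hsub) (by
        intro u hu
        have h0 : 0 < u := by linarith [hu.1]
        refine le_trans ?_ (Real.le_sqrt_of_sq_le
          (by rw [sq_abs]; linarith : |deriv g u| ^ 2 ≤ 1 + deriv g u ^ 2))
        rw [hder u h0.ne', abs_mul, abs_of_pos hc0]
        refine mul_le_mul_of_nonneg_left ?_ hc0.le
        have h4 : u ^ 4 ≤ 1 := pow_le_one₀ h0.le hu.2.le
        have p4 : 0 ≤ u ^ 4 := by positivity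
        have p3 : 0 ≤ M * u ^ 3 := by positivity
        have hs := Real.abs_sin_le_one (M / u)
        have hk := Real.abs_cos_le_one (M / u)
        have e0 : 2 * M / u = 2 * (M / u) := by ring
        have e1 : |5 * u ^ 4 * Real.sin (M / u)| ≤ 5 := by
          rw [abs_mul, abs_of_nonneg (by positivity)]
          nlinarith [abs_nonneg (Real.sin (M / u))]
        have e2 : |M * u ^ 3 * Real.cos (M / u)| ≥ M * u ^ 3 * Real.cos (M / u) ^ 2 := by
          rw [abs_mul, abs_of_nonneg p3, ← sq_abs (Real.cos (M / u))]
          refine mul_le_mul_of_nonneg_left ?_ p3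
          nlinarith [abs_nonneg (Real.cos (M / u))]
        have e3 := abs_sub_abs_le_abs_sub (M * u ^ 3 * Real.cos (M / u))
          (5 * u ^ 4 * Real.sin (M / u))
        rw [abs_sub_comm] at e3
        have e4 : -(5 * u ^ 4 * Real.sin (2 * M / u)) / 4 ≤ 2 := by
          have := Real.neg_one_le_sin (2 * M / u)
          nlinarith
        have e5 := Real.cos_sq (M / u)
        rw [← e0] at e5
        rw [e5] at e2
        nlinarith)
    rw [intervalIntegral.integral_of_le (by norm_num), ← integral_Icc_eq_integral_Ioc] at key
    refine le_trans ?_ key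
    have s1 := Real.sin_le_one (2 * M / 1)
    have s2 := Real.neg_one_le_sin (2 * M / (1 / 2))
    rw [← mul_sub, mul_div_assoc]
    refine mul_le_mul_of_nonneg_left ?_ hc0.le
    norm_num at s1 s2 ⊢
    linarith

/-- Case `3^{1/5} < a < 3^{1/4}` of the example: with
`gₙ(u) = 3ⁿ a^{-5n} u⁵ sin(aⁿ/u)` (and `gₙ(0) = 0`),
`Iₙ = {u ∈ [0,1] : |gₙ(u)| ≤ 1}` and
`Lₙ = ∫_{Iₙ} √(1 + gₙ'(u)²) du`, one has
`limsup (1/n) log Lₙ = log 3 - 4 log a`. -/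
theorem repeller_volume_growth_case_middle (a : ℝ)
    (ha1 : (3 : ℝ) ^ ((1 : ℝ) / 5) < a) (ha2 : a < (3 : ℝ) ^ ((1 : ℝ) / 4))
    (g : ℕ → ℝ → ℝ)
    (hg : ∀ (n : ℕ) (u : ℝ), u ≠ 0 →
      g n u = 3 ^ n * (a ^ (5 * n))⁻¹ * u ^ 5 * Real.sin (a ^ n / u))
    (hg0 : ∀ n : ℕ, g n 0 = 0)
    (L : ℕ → ℝ)
    (hL : ∀ n : ℕ, L n =
      ∫ u in {u : ℝ | u ∈ Set.Icc (0 : ℝ) 1 ∧ |g n u| ≤ 1},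
        Real.sqrt (1 + (deriv (g n) u) ^ 2)) :
    Filter.limsup (fun n : ℕ =>
        (((1 / (n : ℝ)) * Real.log (L n) : ℝ) : EReal)) Filter.atTop =
      ((Real.log 3 - 4 * Real.log a : ℝ) : EReal) := by
  have ha0 : 0 < a := lt_trans (by positivity) ha1
  have h5 : 3 < a ^ 5 := by
    have := pow_lt_pow_left₀ ha1 (by positivity) (n := 5) (by norm_num)
    rwa [← Real.rpow_natCast, ← Real.rpow_mul (by norm_num), show (1:ℝ) / 5 * (5:ℕ) = 1 by norm_num,
      Real.rpow_one] at this
  have h4 : a ^ 4 < 3 := by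
    have := pow_lt_pow_left₀ ha2 ha0.le (n := 4) (by norm_num)
    rwa [← Real.rpow_natCast (3 ^ _), ← Real.rpow_mul (by norm_num),
      show (1:ℝ) / 4 * (4:ℕ) = 1 by norm_num, Real.rpow_one] at this
  have hone : 1 < a := by
    by_contra h
    have := pow_le_one₀ ha0.le (not_lt.1 h) (n := 5)
    linarith
  have hb : 1 < 3 / a ^ 4 := by rw [lt_div_iff₀ (by positivity)]; linarith
  have hcM : ∀ n : ℕ, (3 ^ n * (a ^ (5 * n))⁻¹) * a ^ n = (3 / a ^ 4) ^ n := by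
    intro n
    rw [div_pow, ← pow_mul, show 5 * n = 4 * n + n by ring, pow_add]
    field_simp
  have hbd := fun n : ℕ => repeller_aux_bounds (3 ^ n * (a ^ (5 * n))⁻¹) (a ^ n) (by positivity)
    (by
      rw [pow_mul, ← div_eq_mul_inv, ← div_pow]
      exact pow_le_one₀ (by positivity) ((div_le_one (by positivity)).2 h5.le))
    (one_le_pow₀ hone.le) (by rw [hcM]; exact one_le_pow₀ hb.le) (g n) (hg n) (hg0 n)
  simp only [← hL, hcM] at hbd
  have hlog : Real.log (3 / a ^ 4) = Real.log 3 - 4 * Real.log a := by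
    rw [Real.log_div (by norm_num) (by positivity), Real.log_pow]; norm_num
  have hM : ∀ᶠ n : ℕ in Filter.atTop, 100 ≤ a ^ n :=
    (tendsto_pow_atTop_atTop_of_one_lt hone).eventually_ge_atTop 100
  have hlim : ∀ k : ℝ, Filter.Tendsto (fun n : ℕ => Real.log (3 / a ^ 4) + k / (n : ℝ))
      Filter.atTop (nhds (Real.log 3 - 4 * Real.log a)) := by
    intro k
    have := (tendsto_const_div_atTop_nhds_zero_nat k).const_add (Real.log (3 / a ^ 4))
    rw [add_zero] at this
    rwa [← hlog]
  have hb0 : 0 < 3 / a ^ 4 := by positivity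
  have main : Filter.Tendsto (fun n : ℕ => (1 / (n : ℝ)) * Real.log (L n)) Filter.atTop
      (nhds (Real.log 3 - 4 * Real.log a)) := by
    refine tendsto_of_tendsto_of_tendsto_of_le_of_le' (hlim (-Real.log 16)) (hlim (Real.log 7)) ?_ ?_
    · filter_upwards [hM, Filter.eventually_gt_atTop 0] with n hn hn0
      have hn0' : (0:ℝ) < n := by exact_mod_cast hn0
      have h := Real.log_le_log (by positivity) ((hbd n).2 hn)
      rw [Real.log_div (by positivity) (by norm_num), Real.log_pow] at h
      have := mul_le_mul_of_nonneg_left h (by positivity : 0 ≤ 1 / (n : ℝ))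
      refine le_trans (le_of_eq ?_) this
      field_simp
      ring
    · filter_upwards [hM, Filter.eventually_gt_atTop 0] with n hn hn0
      have hn0' : (0:ℝ) < n := by exact_mod_cast hn0
      have hLpos : 0 < L n := lt_of_lt_of_le (by positivity) ((hbd n).2 hn)
      have h := Real.log_le_log hLpos (hbd n).1
      rw [Real.log_mul (by norm_num) (by positivity), Real.log_pow] at h
      have := mul_le_mul_of_nonneg_left h (by positivity : 0 ≤ 1 / (n : ℝ))
      refine le_trans this (le_of_eq ?_)
      field_simp
      ring
  exact ((continuous_coe_real_ereal.tendsto _).comp main).limsup_eq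
end

section
/- Fix a real number a with 1 < a ≤ 3^{1/5}. Then limsup_{n→∞} (1/n) log Lₙ = (1/5) log 3. -/
open MeasureTheory Set Filter Topology

namespace RepellerAux

lemma hasDeriv_div (A : ℝ) {u : ℝ} (hu0 : u ≠ 0) :
    HasDerivAt (fun u : ℝ => A / u) (-(A / u ^ 2)) u := by
  have := (hasDerivAt_inv hu0).const_mul A
  simp only [← div_eq_mul_inv] at this
  refine this.congr_deriv ?_
  ring

/-- explicit derivative -/
noncomputable def D (A r u : ℝ) : ℝ :=
  5 * r ^ 5 * u ^ 4 * Real.sin (A / u) - r ^ 5 * A * u ^ 3 * Real.cos (A / u)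

/-- the set of integration without zero -/
def S (A r : ℝ) : Set ℝ := {u | u ∈ Ioc (0 : ℝ) 1 ∧ |r ^ 5 * u ^ 5 * Real.sin (A / u)| ≤ 1}

/-- main part of the derivative -/
noncomputable def H (A r u : ℝ) : ℝ := r ^ 5 * A * u ^ 3 * |Real.cos (A / u)|

lemma measurable_D (A r : ℝ) : Measurable (D A r) := by unfold D; fun_prop
lemma measurable_H (A r : ℝ) : Measurable (H A r) := by unfold H; fun_prop

lemma measurableSet_S (A r : ℝ) : MeasurableSet (S A r) := by
  unfold S
  have h : Measurable fun u : ℝ => |r ^ 5 * u ^ 5 * Real.sin (A / u)| := by fun_prop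
  exact measurableSet_Ioc.inter (measurableSet_le h measurable_const)

lemma S_sub (A r : ℝ) : S A r ⊆ Ioc 0 1 := fun _ h => h.1

lemma volS (A r : ℝ) : volume (S A r) ≠ ⊤ :=
  ((measure_mono (S_sub A r)).trans_lt (by simp)).ne

lemma volS_le (A r : ℝ) : volume.real (S A r) ≤ 1 := by
  have := measureReal_mono (μ := volume) (S_sub A r) (by simp)
  simpa using this

lemma H_nonneg {A r u : ℝ} (hA : 0 ≤ A) (hr : 0 ≤ r) (hu : 0 ≤ u) : 0 ≤ H A r u := by
  unfold H; positivity

lemma H_le {A r u : ℝ} (hA : 0 ≤ A) (hr : 0 ≤ r) (hu : 0 ≤ u) :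
    H A r u ≤ r ^ 5 * A * u ^ 3 := by
  unfold H
  exact mul_le_of_le_one_right (by positivity) (Real.abs_cos_le_one _)

lemma H_int {A r : ℝ} (hA : 0 ≤ A) (hr : 0 ≤ r) : IntegrableOn (H A r) (Ioc 0 1) := by
  refine Measure.integrableOn_of_bounded (M := r ^ 5 * A) (by simp)
    (measurable_H A r).aestronglyMeasurable ?_
  refine (ae_restrict_iff' measurableSet_Ioc).2 (ae_of_all _ fun u hu => ?_)
  rw [Real.norm_of_nonneg (H_nonneg hA hr hu.1.le)]
  refine (H_le hA hr hu.1.le).trans (mul_le_of_le_one_right (by positivity) ?_)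
  exact pow_le_one₀ hu.1.le hu.2

lemma sq_le {A r u : ℝ} : √(1 + D A r u ^ 2) ≤ 1 + |D A r u| := by
  rw [Real.sqrt_le_left (by positivity)]
  nlinarith [sq_abs (D A r u), abs_nonneg (D A r u)]

/-- pointwise majorant on `S` -/
lemma f_le {A r u : ℝ} (hA : 0 ≤ A) (hr : 1 ≤ r) (hu : u ∈ S A r) :
    √(1 + D A r u ^ 2) ≤ 1 + 5 * r + H A r u := by
  obtain ⟨⟨h0, h1⟩, hs⟩ := hu
  have hr0 : 0 < r := by linarith
  refine sq_le.trans ?_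
  have h2 : |5 * r ^ 5 * u ^ 4 * Real.sin (A / u)| ≤ 5 * r := by
    rcases le_total (r * u) 1 with h | h
    · rw [abs_mul, abs_of_nonneg (by positivity)]
      refine (mul_le_of_le_one_right (by positivity) (Real.abs_sin_le_one _)).trans ?_
      have : (r * u) ^ 4 ≤ 1 := pow_le_one₀ (by positivity) h
      calc 5 * r ^ 5 * u ^ 4 = 5 * r * (r * u) ^ 4 := by ring
        _ ≤ 5 * r * 1 := by gcongr
        _ = 5 * r := by ring
    · have e : |5 * r ^ 5 * u ^ 4 * Real.sin (A / u)| * u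
          = 5 * |r ^ 5 * u ^ 5 * Real.sin (A / u)| := by
        rw [abs_mul, abs_mul (r ^ 5 * u ^ 5), abs_of_nonneg (show 0 ≤ 5 * r ^ 5 * u ^ 4 by positivity),
          abs_of_nonneg (show 0 ≤ r ^ 5 * u ^ 5 by positivity)]
        ring
      refine le_of_mul_le_mul_right ?_ h0
      rw [e]; nlinarith
  have h3 : |r ^ 5 * A * u ^ 3 * Real.cos (A / u)| = H A r u := by
    unfold H; rw [abs_mul, abs_of_nonneg (by positivity)]
  have := abs_sub (5 * r ^ 5 * u ^ 4 * Real.sin (A / u)) (r ^ 5 * A * u ^ 3 * Real.cos (A / u))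
  unfold D; linarith

lemma piece {A r α β ε : ℝ} (hA : 0 ≤ A) (hr : 1 ≤ r) (hα : 0 < α) (hαβ : α ≤ β)
    (hβ : β ≤ 3 * α) (hε : ε ^ 2 = 1)
    (hc : ∀ u ∈ Icc α β, 0 ≤ ε * Real.cos (A / u)) :
    ∫ u in S A r ∩ Ioc α β, H A r u ≤ 486 * Real.pi := by
  have hr0 : 0 < r := by linarith
  set B : ℝ := r ^ 5 * α ^ 5 with hB
  have hB0 : 0 < B := by positivity
  have habs : |ε| = 1 := by
    rw [← sq_abs] at hε
    nlinarith [abs_nonneg ε]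
  let F : ℝ → ℝ := fun u => -ε * Real.arctan (B * Real.sin (A / u))
  let φ : ℝ → ℝ := fun u => ε * (1 / (1 + (B * Real.sin (A / u)) ^ 2) *
    (B * (Real.cos (A / u) * (A / u ^ 2))))
  have hF : ∀ u ∈ uIcc α β, HasDerivAt F (φ u) u := by
    intro u hu
    rw [uIcc_of_le hαβ] at hu
    have hu0 : u ≠ 0 := (hα.trans_le hu.1).ne'
    have h1 := hasDeriv_div A hu0
    have h2 := ((h1.sin.const_mul B).arctan).const_mul (-ε)
    refine h2.congr_deriv ?_
    simp only [φ]; ring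
  have hcont : ContinuousOn φ (Icc α β) := by
    intro u hu
    have hu0 : u ≠ 0 := (hα.trans_le hu.1).ne'
    refine ContinuousAt.continuousWithinAt ?_
    have : 1 + (B * Real.sin (A / u)) ^ 2 ≠ 0 := by positivity
    have : u ^ 2 ≠ 0 := by positivity
    simp only [φ]
    fun_prop (disch := assumption)
  have hint : IntervalIntegrable φ volume α β := by
    apply ContinuousOn.intervalIntegrable; rwa [uIcc_of_le hαβ]
  have hval := intervalIntegral.integral_eq_sub_of_hasDerivAt hF hint
  rw [intervalIntegral.integral_of_le hαβ] at hval
  have hφi : IntegrableOn φ (Ioc α β) := (intervalIntegrable_iff_integrableOn_Ioc_of_le hαβ).1 hint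
  have hφn : ∀ u ∈ Ioc α β, 0 ≤ φ u := by
    intro u hu
    have : φ u = (ε * Real.cos (A / u)) * (1 / (1 + (B * Real.sin (A / u)) ^ 2) *
       (B * (A / u ^ 2))) := by simp only [φ]; ring
    rw [this]
    exact mul_nonneg (hc u ⟨hu.1.le, hu.2⟩) (by positivity)
  have hFb : ∀ u, |F u| ≤ Real.pi / 2 := by
    intro u
    simp only [F, abs_mul, abs_neg, habs, one_mul]
    exact abs_le.2 ⟨(Real.neg_pi_div_two_lt_arctan _).le, (Real.arctan_lt_pi_div_two _).le⟩
  have hφint : ∫ u in Ioc α β, φ u ≤ Real.pi := by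
    rw [hval]
    have h1 := abs_le.1 (hFb β)
    have h2 := abs_le.1 (hFb α)
    linarith
  have hms : MeasurableSet (S A r ∩ Ioc α β) := (measurableSet_S A r).inter measurableSet_Ioc
  calc ∫ u in S A r ∩ Ioc α β, H A r u ≤ ∫ u in S A r ∩ Ioc α β, 486 * φ u := by
        refine setIntegral_mono_on ((H_int hA hr0.le).mono_set fun u h => S_sub A r h.1)
          (IntegrableOn.mono_set (hφi.const_mul 486) inter_subset_right) hms ?_
        rintro u ⟨⟨⟨h0, h1⟩, hs⟩, hα', hβ'⟩
        have hcos := hc u ⟨hα'.le, hβ'⟩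
        have hcabs : |Real.cos (A / u)| = ε * Real.cos (A / u) := by
          rw [← abs_of_nonneg hcos, abs_mul, habs, one_mul]
        have hBs : (B * Real.sin (A / u)) ^ 2 ≤ 1 := by
          rw [sq_le_one_iff_abs_le_one]
          refine le_trans ?_ hs
          rw [abs_mul, abs_mul (r ^ 5 * u ^ 5), abs_of_pos hB0,
            abs_of_pos (show 0 < r ^ 5 * u ^ 5 by positivity), hB]
          gcongr
        have hu5 : r ^ 5 * u ^ 5 ≤ 243 * B := by
          have : u ^ 5 ≤ (3 * α) ^ 5 := by gcongr; linarith
          rw [hB]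
          calc r ^ 5 * u ^ 5 ≤ r ^ 5 * (3 * α) ^ 5 := by gcongr
            _ = _ := by ring
        have hq : (1 : ℝ) ≤ 2 * (1 / (1 + (B * Real.sin (A / u)) ^ 2)) := by
          rw [mul_one_div, le_div_iff₀ (by positivity)]; linarith
        have e1 : H A r u = (r ^ 5 * u ^ 5) * ((A / u ^ 2) * (ε * Real.cos (A / u))) := by
          unfold H; rw [hcabs]; field_simp
        have e2 : 486 * φ u = (243 * B) * ((A / u ^ 2) * (ε * Real.cos (A / u))) *
            (2 * (1 / (1 + (B * Real.sin (A / u)) ^ 2))) := by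
          simp only [φ]; ring
        have hnn : 0 ≤ (A / u ^ 2) * (ε * Real.cos (A / u)) := mul_nonneg (by positivity) hcos
        rw [e1, e2]
        exact (mul_le_mul_of_nonneg_right hu5 hnn).trans
          (le_mul_of_one_le_right (by positivity) hq)
    _ ≤ ∫ u in Ioc α β, 486 * φ u := by
        refine setIntegral_mono_set (hφi.const_mul 486) ?_ inter_subset_right.eventuallyLE
        exact (ae_restrict_iff' measurableSet_Ioc).2
          (ae_of_all _ fun u hu => mul_nonneg (by norm_num) (hφn u hu))
    _ = 486 * ∫ u in Ioc α β, φ u := integral_const_mul _ _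
    _ ≤ 486 * Real.pi := by gcongr

/-- breakpoints -/
noncomputable def b (A : ℝ) (k : ℕ) : ℝ := A / (k * Real.pi + Real.pi / 2)

lemma b_pos {A : ℝ} (hA : 0 < A) (k : ℕ) : 0 < b A k := by
  unfold b; have := Real.pi_pos; positivity

lemma b_anti {A : ℝ} (hA : 0 < A) (k : ℕ) : b A (k + 1) ≤ b A k := by
  unfold b; have := Real.pi_pos
  push_cast
  gcongr
  linarith

lemma b_three {A : ℝ} (hA : 0 < A) (k : ℕ) : b A k ≤ 3 * b A (k + 1) := by
  unfold b; have := Real.pi_pos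
  push_cast
  rw [← mul_div_assoc, div_le_div_iff₀ (by positivity) (by positivity)]
  have : (0:ℝ) ≤ k * Real.pi := by positivity
  nlinarith

lemma pieces {A r : ℝ} (hA : 2 ≤ A) (hr : 1 ≤ r) (k : ℕ) :
    ∫ u in S A r ∩ Ioc (b A k) 1, H A r u ≤ k * (486 * Real.pi) := by
  have hA0 : 0 < A := by linarith
  have hr0 : 0 < r := by linarith
  have hpi := Real.pi_pos
  induction k with
  | zero =>
    have : Ioc (b A 0) 1 = ∅ := by
      apply Ioc_eq_empty
      unfold b
      have := Real.pi_lt_four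
      rw [not_lt, le_div_iff₀ (by positivity)]
      push_cast
      linarith
    simp [this]
  | succ k ih =>
    have hsub : S A r ∩ Ioc (b A (k + 1)) 1 ⊆
        (S A r ∩ Ioc (b A (k + 1)) (b A k)) ∪ (S A r ∩ Ioc (b A k) 1) := by
      rintro u ⟨h1, h2, h3⟩
      rcases le_or_gt u (b A k) with h | h
      · exact Or.inl ⟨h1, h2, h⟩
      · exact Or.inr ⟨h1, h, h3⟩
    have hi : ∀ T, IntegrableOn (H A r) (S A r ∩ T) := fun T =>
      (H_int hA0.le hr0.le).mono_set fun u h => S_sub A r h.1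
    have hp : ∫ u in S A r ∩ Ioc (b A (k + 1)) (b A k), H A r u ≤ 486 * Real.pi := by
      refine piece (ε := (-1) ^ (k + 1)) hA0.le hr (b_pos hA0 _) (b_anti hA0 k) (b_three hA0 k)
        (by rw [← pow_mul, mul_comm, pow_mul]; norm_num) ?_
      intro u hu
      have hu0 : 0 < u := (b_pos hA0 _).trans_le hu.1
      rw [← Real.cos_sub_nat_mul_pi]
      have h1 := hu.1
      have h2 := hu.2
      unfold b at h1 h2
      rw [div_le_iff₀ (by positivity)] at h1
      rw [le_div_iff₀ (by positivity)] at h2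
      apply Real.cos_nonneg_of_neg_pi_div_two_le_of_le
      · have : k * Real.pi + Real.pi / 2 ≤ A / u := by
          rw [le_div_iff₀ hu0]; linarith
        push_cast; linarith
      · have : A / u ≤ ((k + 1 : ℕ) : ℝ) * Real.pi + Real.pi / 2 := by
          rw [div_le_iff₀ hu0]; linarith
        linarith
    calc _ ≤ ∫ u in (S A r ∩ Ioc (b A (k + 1)) (b A k)) ∪ (S A r ∩ Ioc (b A k) 1), H A r u := by
          refine setIntegral_mono_set ((hi _).union (hi _)) ?_ hsub.eventuallyLE
          refine (ae_restrict_iff' (((measurableSet_S A r).inter measurableSet_Ioc).union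
            ((measurableSet_S A r).inter measurableSet_Ioc))).2 (ae_of_all _ fun u hu => ?_)
          have : u ∈ S A r := by rcases hu with h | h <;> exact h.1
          exact H_nonneg hA0.le hr0.le this.1.1.le
      _ = _ := by
          refine setIntegral_union ?_ ((measurableSet_S A r).inter measurableSet_Ioc) (hi _) (hi _)
          rw [Set.disjoint_left]
          rintro u ⟨_, _, h⟩ ⟨_, h', _⟩
          linarith
      _ ≤ 486 * Real.pi + k * (486 * Real.pi) := add_le_add hp ih
      _ = _ := by push_cast; ring

lemma f_int {A r : ℝ} (hA : 0 ≤ A) (hr : 1 ≤ r) :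
    IntegrableOn (fun u => √(1 + D A r u ^ 2)) (S A r) := by
  have hD := measurable_D A r
  have h : IntegrableOn (fun u => 1 + 5 * r + H A r u) (S A r) :=
    (integrableOn_const (volS A r)).add ((H_int hA (by linarith)).mono_set (S_sub A r))
  refine Integrable.mono' h (by fun_prop) ?_
  refine (ae_restrict_iff' (measurableSet_S A r)).2 (ae_of_all _ fun u hu => ?_)
  rw [Real.norm_of_nonneg (Real.sqrt_nonneg _)]
  exact f_le hA hr hu

lemma upper {A r : ℝ} (hA : 2 ≤ A) (hr : 1 ≤ r) :
    ∫ u in S A r, √(1 + D A r u ^ 2) ≤ 6000 * (A * r) := by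
  have hA0 : 0 < A := by linarith
  have hr0 : 0 < r := by linarith
  have hpi := Real.pi_pos
  have hX : r ≤ A * r := by nlinarith
  have hHS : IntegrableOn (H A r) (S A r) := (H_int hA0.le hr0.le).mono_set (S_sub A r)
  have hcS : IntegrableOn (fun _ => 1 + 5 * r) (S A r) := integrableOn_const (volS A r)
  have h1 : ∫ u in S A r, √(1 + D A r u ^ 2) ≤ 1 + 5 * r + ∫ u in S A r, H A r u := by
    calc _ ≤ ∫ u in S A r, (1 + 5 * r + H A r u) :=
          setIntegral_mono_on (f_int hA0.le hr) (hcS.add hHS) (measurableSet_S A r)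
            fun u hu => f_le hA0.le hr hu
      _ = volume.real (S A r) * (1 + 5 * r) + ∫ u in S A r, H A r u := by
          rw [integral_add hcS hHS, setIntegral_const, smul_eq_mul]
      _ ≤ _ := by
          have := mul_le_of_le_one_left (show 0 ≤ 1 + 5 * r by positivity) (volS_le A r)
          linarith
  set N : ℕ := ⌈A * r / Real.pi⌉₊ with hN
  have hN1 : A * r / Real.pi ≤ N := Nat.le_ceil _
  have hN2 : (N : ℝ) < A * r / Real.pi + 1 := Nat.ceil_lt_add_one (by positivity)
  have hbN : b A N ≤ 1 / r := by
    unfold b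
    rw [div_le_div_iff₀ (by positivity) hr0]
    rw [div_le_iff₀ hpi] at hN1
    linarith
  have h2 : ∫ u in S A r, H A r u =
      (∫ u in S A r ∩ Ioc 0 (b A N), H A r u) + ∫ u in S A r ∩ Ioc (b A N) 1, H A r u := by
    rw [← setIntegral_union ?_ ((measurableSet_S A r).inter measurableSet_Ioc)
      (hHS.mono_set inter_subset_left) (hHS.mono_set inter_subset_left)]
    · congr 2
      ext u
      constructor
      · intro h
        rcases le_or_gt u (b A N) with h' | h'
        · exact Or.inl ⟨h, h.1.1, h'⟩
        · exact Or.inr ⟨h, h', h.1.2⟩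
      · rintro (h | h) <;> exact h.1
    · rw [Set.disjoint_left]
      rintro u ⟨_, _, h⟩ ⟨_, h', _⟩
      linarith
  have h3 : ∫ u in S A r ∩ Ioc 0 (b A N), H A r u ≤ A * r := by
    have hv : volume (S A r ∩ Ioc 0 (b A N)) < ⊤ :=
      (measure_mono inter_subset_right).trans_lt (by simp)
    calc _ ≤ ∫ u in S A r ∩ Ioc 0 (b A N), A * r ^ 2 := by
          refine setIntegral_mono_on (hHS.mono_set inter_subset_left)
            (integrableOn_const hv.ne) ((measurableSet_S A r).inter measurableSet_Ioc) ?_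
          rintro u ⟨_, h0, hu⟩
          have hru : r * u ≤ 1 := by
            have := hu.trans hbN
            rw [le_div_iff₀ hr0] at this; linarith
          calc H A r u ≤ r ^ 5 * A * u ^ 3 := H_le hA0.le hr0.le h0.le
            _ = A * r ^ 2 * (r * u) ^ 3 := by ring
            _ ≤ A * r ^ 2 := mul_le_of_le_one_right (by positivity)
                (pow_le_one₀ (by positivity) hru)
      _ = volume.real (S A r ∩ Ioc 0 (b A N)) * (A * r ^ 2) := by
          rw [setIntegral_const, smul_eq_mul]
      _ ≤ (1 / r) * (A * r ^ 2) := by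
          gcongr
          have := measureReal_mono (μ := volume) (inter_subset_right (s := S A r) (t := Ioc 0 (b A N))) (by simp)
          simp only [Real.volume_real_Ioc, sub_zero, max_eq_left (b_pos hA0 N).le] at this
          exact this.trans hbN
      _ = _ := by field_simp
  have h4 := pieces hA hr N
  have h5 : (N : ℝ) * (486 * Real.pi) ≤ 486 * (A * r) + 486 * 4 := by
    have : (N : ℝ) * Real.pi ≤ A * r + Real.pi := by
      have := mul_le_mul_of_nonneg_right hN2.le hpi.le
      rwa [add_mul, div_mul_cancel₀ _ hpi.ne', one_mul] at this
    have := Real.pi_lt_four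
    linarith
  linarith

lemma lower {A r : ℝ} (hA : 2 ≤ A) (hr : 1 ≤ r) :
    A * r / 64 - 3 ≤ ∫ u in S A r, √(1 + D A r u ^ 2) := by
  have hA0 : 0 < A := by linarith
  have hr0 : 0 < r := by linarith
  have hle : 1 / (2 * r) ≤ 1 / r := by gcongr; linarith
  have hα : 0 < 1 / (2 * r) := by positivity
  let F : ℝ → ℝ := fun u => -(1 / 32) * ((A / u) / 2 + Real.sin (2 * (A / u)) / 4) - 5 * r * u
  let φ : ℝ → ℝ := fun u => (1 / 32) * ((A / u ^ 2) * Real.cos (A / u) ^ 2) - 5 * r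
  have hF : ∀ u ∈ uIcc (1 / (2 * r)) (1 / r), HasDerivAt F (φ u) u := by
    intro u hu
    rw [uIcc_of_le hle] at hu
    have hu0 : u ≠ 0 := (hα.trans_le hu.1).ne'
    have h1 := hasDeriv_div A hu0
    have h2 := (((h1.div_const 2).add ((h1.const_mul 2).sin.div_const 4)).const_mul (-(1/32))).sub
      ((hasDerivAt_id u).const_mul (5 * r))
    refine h2.congr_deriv ?_
    simp only [φ, Real.cos_two_mul]; ring
  have hcont : ContinuousOn φ (Icc (1 / (2 * r)) (1 / r)) := by
    intro u hu
    have hu0 : u ≠ 0 := (hα.trans_le hu.1).ne'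
    refine ContinuousAt.continuousWithinAt ?_
    have : u ^ 2 ≠ 0 := by positivity
    simp only [φ]
    fun_prop (disch := assumption)
  have hint : IntervalIntegrable φ volume (1 / (2 * r)) (1 / r) := by
    apply ContinuousOn.intervalIntegrable; rwa [uIcc_of_le hle]
  have hval := intervalIntegral.integral_eq_sub_of_hasDerivAt hF hint
  rw [intervalIntegral.integral_of_le hle] at hval
  have hφi : IntegrableOn φ (Ioc (1 / (2 * r)) (1 / r)) :=
    (intervalIntegrable_iff_integrableOn_Ioc_of_le hle).1 hint
  have hru : ∀ u ∈ Ioc (1 / (2 * r)) (1 / r), 1 / 2 ≤ r * u ∧ r * u ≤ 1 := by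
    rintro u ⟨h1, h2⟩
    rw [div_lt_iff₀ (by positivity)] at h1
    rw [le_div_iff₀ hr0] at h2
    constructor <;> linarith
  have hsub : Ioc (1 / (2 * r)) (1 / r) ⊆ S A r := by
    intro u hu
    have h0 : 0 < u := hα.trans hu.1
    obtain ⟨h1, h2⟩ := hru u hu
    refine ⟨⟨h0, by nlinarith⟩, ?_⟩
    rw [abs_mul, ← mul_pow]
    refine mul_le_one₀ ?_ (abs_nonneg _) (Real.abs_sin_le_one _)
    rw [abs_of_nonneg (by positivity)]
    exact pow_le_one₀ (by positivity) h2
  have hlow : A * r / 64 - 3 ≤ ∫ u in Ioc (1 / (2 * r)) (1 / r), φ u := by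
    rw [hval]
    have e1 : A / (1 / r) = A * r := by field_simp
    have e2 : A / (1 / (2 * r)) = 2 * (A * r) := by field_simp
    have e3 : 5 * r * (1 / r) = 5 := by field_simp
    have e4 : 5 * r * (1 / (2 * r)) = 5 / 2 := by field_simp
    simp only [F, e1, e2, e3, e4]
    have h1 := Real.sin_le_one (2 * (A * r))
    have h2 := Real.neg_one_le_sin (2 * (2 * (A * r)))
    linarith
  refine hlow.trans ?_
  calc _ ≤ ∫ u in Ioc (1 / (2 * r)) (1 / r), √(1 + D A r u ^ 2) := by
        refine setIntegral_mono_on hφi ((f_int hA0.le hr).mono_set hsub) measurableSet_Ioc ?_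
        intro u hu
        have h0 : 0 < u := hα.trans hu.1
        obtain ⟨h1, h2⟩ := hru u hu
        have hs : |D A r u| ≤ √(1 + D A r u ^ 2) := Real.abs_le_sqrt (by linarith)
        have h3 : |5 * r ^ 5 * u ^ 4 * Real.sin (A / u)| ≤ 5 * r := by
          rw [abs_mul, abs_of_nonneg (by positivity)]
          refine (mul_le_of_le_one_right (by positivity) (Real.abs_sin_le_one _)).trans ?_
          have : (r * u) ^ 4 ≤ 1 := pow_le_one₀ (by positivity) h2
          calc 5 * r ^ 5 * u ^ 4 = 5 * r * (r * u) ^ 4 := by ring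
            _ ≤ 5 * r * 1 := by gcongr
            _ = 5 * r := by ring
        have h4 : (1 / 32) * ((A / u ^ 2) * Real.cos (A / u) ^ 2) ≤
            |r ^ 5 * A * u ^ 3 * Real.cos (A / u)| := by
          have h5 : (1 / 2 : ℝ) ^ 5 ≤ (r * u) ^ 5 := by gcongr
          have e : |r ^ 5 * A * u ^ 3 * Real.cos (A / u)| =
              (r * u) ^ 5 * ((A / u ^ 2) * |Real.cos (A / u)|) := by
            rw [abs_mul, abs_of_nonneg (by positivity)]; field_simp
          rw [e]
          have h6 : Real.cos (A / u) ^ 2 ≤ |Real.cos (A / u)| := by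
            rw [← sq_abs]
            nlinarith [abs_nonneg (Real.cos (A / u)), Real.abs_cos_le_one (A / u)]
          have h7 : (1 / 32 : ℝ) ≤ (r * u) ^ 5 := by norm_num at h5 ⊢; exact h5
          gcongr
        have h8 : |r ^ 5 * A * u ^ 3 * Real.cos (A / u)| - |5 * r ^ 5 * u ^ 4 * Real.sin (A / u)|
            ≤ |D A r u| := by
          unfold D; rw [abs_sub_comm]; exact abs_sub_abs_le_abs_sub _ _
        simp only [φ]; linarith
    _ ≤ _ := setIntegral_mono_set (f_int hA0.le hr)
        (ae_of_all _ fun u => Real.sqrt_nonneg _) hsub.eventuallyLE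

lemma transfer {A r : ℝ} (g : ℝ → ℝ)
    (hg : ∀ u : ℝ, u ≠ 0 → g u = r ^ 5 * u ^ 5 * Real.sin (A / u)) :
    ∫ u in {u : ℝ | u ∈ Icc (0 : ℝ) 1 ∧ |g u| ≤ 1}, √(1 + (deriv g u) ^ 2) =
      ∫ u in S A r, √(1 + D A r u ^ 2) := by
  have hset : ({u : ℝ | u ∈ Icc (0 : ℝ) 1 ∧ |g u| ≤ 1} : Set ℝ) =ᵐ[volume] S A r := by
    have h0 : ∀ᵐ u : ℝ, u ≠ 0 := by simp [ae_iff]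
    filter_upwards [h0] with u hu
    apply propext
    change (u ∈ Icc (0 : ℝ) 1 ∧ |g u| ≤ 1) ↔
      (u ∈ Ioc (0 : ℝ) 1 ∧ |r ^ 5 * u ^ 5 * Real.sin (A / u)| ≤ 1)
    rw [hg u hu]
    refine and_congr_left fun _ => ⟨fun h => ⟨lt_of_le_of_ne h.1 hu.symm, h.2⟩,
      fun h => ⟨h.1.le, h.2⟩⟩
  rw [setIntegral_congr_set hset]
  refine setIntegral_congr_fun (measurableSet_S A r) fun u hu => ?_
  have hu0 : u ≠ 0 := hu.1.1.ne'
  have h1 := hasDeriv_div A hu0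
  have h2 : HasDerivAt (fun u : ℝ => r ^ 5 * u ^ 5 * Real.sin (A / u)) (D A r u) u := by
    refine (((hasDerivAt_pow 5 u).const_mul (r ^ 5)).mul h1.sin).congr_deriv ?_
    unfold D; field_simp; push_cast; ring
  have h3 : g =ᶠ[𝓝 u] fun u : ℝ => r ^ 5 * u ^ 5 * Real.sin (A / u) := by
    filter_upwards [isOpen_ne.mem_nhds hu0] with v hv using hg v hv
  simp only [(h2.congr_of_eventuallyEq h3).deriv]

end RepellerAux

theorem repeller_volume_growth_case_small (a : ℝ)
    (ha1 : 1 < a) (ha2 : a ≤ (3 : ℝ) ^ ((1 : ℝ) / 5))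
    (g : ℕ → ℝ → ℝ)
    (hg : ∀ (n : ℕ) (u : ℝ), u ≠ 0 →
      g n u = 3 ^ n * (a ^ (5 * n))⁻¹ * u ^ 5 * Real.sin (a ^ n / u))
    (hg0 : ∀ n : ℕ, g n 0 = 0)
    (L : ℕ → ℝ)
    (hL : ∀ n : ℕ, L n =
      ∫ u in {u : ℝ | u ∈ Set.Icc (0 : ℝ) 1 ∧ |g n u| ≤ 1},
        Real.sqrt (1 + (deriv (g n) u) ^ 2)) :
    Filter.limsup (fun n : ℕ =>
        (((1 / (n : ℝ)) * Real.log (L n) : ℝ) : EReal)) Filter.atTop =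
      (((1 / 5) * Real.log 3 : ℝ) : EReal) := by
  set t : ℝ := (3 : ℝ) ^ ((1 : ℝ) / 5) with ht
  have ht5 : t ^ 5 = 3 := by
    rw [ht, ← Real.rpow_natCast, ← Real.rpow_mul (by norm_num)]; norm_num
  have ha0 : 0 < a := by linarith
  have ht1 : 1 < t := by linarith
  have hlogt : Real.log t = (1 / 5) * Real.log 3 := by
    rw [ht, Real.log_rpow (by norm_num)]
  have hLn : ∀ n, L n = ∫ u in RepellerAux.S (a ^ n) ((t / a) ^ n),
      √(1 + RepellerAux.D (a ^ n) ((t / a) ^ n) u ^ 2) := by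
    intro n
    rw [hL n]
    apply RepellerAux.transfer
    intro u hu
    rw [hg n u hu]
    have : ((t / a) ^ n) ^ 5 = 3 ^ n * (a ^ (5 * n))⁻¹ := by
      rw [← pow_mul, mul_comm n 5, div_pow, pow_mul, ht5, div_eq_mul_inv]
    rw [this]
  have hX : ∀ n : ℕ, a ^ n * (t / a) ^ n = t ^ n := by
    intro n; rw [← mul_pow, mul_div_cancel₀ _ ha0.ne']
  have hr : ∀ n : ℕ, 1 ≤ (t / a) ^ n := fun n => one_le_pow₀ ((one_le_div ha0).2 ha2)
  have hA := (tendsto_pow_atTop_atTop_of_one_lt ha1).eventually_ge_atTop 2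
  have hT := (tendsto_pow_atTop_atTop_of_one_lt ht1).eventually_ge_atTop 384
  have key : Filter.Tendsto (fun n : ℕ => (1 / (n : ℝ)) * Real.log (L n)) Filter.atTop
      (𝓝 ((1 / 5) * Real.log 3)) := by
    have hlim : ∀ C : ℝ, Filter.Tendsto (fun n : ℕ => (1 / 5) * Real.log 3 + C / (n : ℝ))
        Filter.atTop (𝓝 ((1 / 5) * Real.log 3)) := by
      intro C
      simpa using (tendsto_const_nhds (x := (1 / 5) * Real.log 3)).add
        (tendsto_const_div_atTop_nhds_zero_nat C)
    refine tendsto_of_tendsto_of_tendsto_of_le_of_le' (hlim (-Real.log 128)) (hlim (Real.log 6000))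
      ?_ ?_
    · filter_upwards [hA, hT, Filter.eventually_gt_atTop 0] with n hn hn' hn0
      have hn0' : (0 : ℝ) < n := by exact_mod_cast hn0
      have h1 := RepellerAux.lower hn (hr n)
      rw [← hLn, hX] at h1
      have h2 : t ^ n / 128 ≤ L n := by linarith
      have h3 : Real.log (t ^ n / 128) ≤ Real.log (L n) := Real.log_le_log (by positivity) h2
      rw [Real.log_div (by positivity) (by norm_num), Real.log_pow, hlogt] at h3
      calc _ = (1 / (n : ℝ)) * (n * (1 / 5 * Real.log 3) - Real.log 128) := by field_simp; ring
        _ ≤ _ := by gcongr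
    · filter_upwards [hA, hT, Filter.eventually_gt_atTop 0] with n hn hn' hn0
      have hn0' : (0 : ℝ) < n := by exact_mod_cast hn0
      have h1 := RepellerAux.lower hn (hr n)
      have h2 := RepellerAux.upper hn (hr n)
      rw [← hLn, hX] at h1 h2
      have h3 : Real.log (L n) ≤ Real.log (6000 * t ^ n) := Real.log_le_log (by linarith) h2
      rw [Real.log_mul (by norm_num) (by positivity), Real.log_pow, hlogt] at h3
      calc _ ≤ (1 / (n : ℝ)) * (Real.log 6000 + n * (1 / 5 * Real.log 3)) := by gcongr
        _ = _ := by field_simp; ring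
  exact ((continuous_coe_real_ereal.tendsto _).comp key).limsup_eq
end

section
/- Let A ≤ B be real numbers with 0 < A. Then the set S := {t ∈ [A,B] : tan t = t/5} is finite, and its cardinality satisfies #S ≤ (B − A)/π + 1. Moreover, for every integer k, the set S contains at most one point in the interval (kπ − π/2, kπ + π/2). -/
theorem tan_gap (s t : ℝ) (hs : 0 < s) (hst : s < t) (h1 : Real.tan s = s / 5)
    (h2 : Real.tan t = t / 5) : Real.pi ≤ t - s := by
  by_contra hlt
  push Not at hlt
  have hd : 0 < t - s := by linarith
  have hcs : Real.cos s ≠ 0 := by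
    intro h
    rw [Real.tan_eq_sin_div_cos, h, div_zero] at h1
    linarith
  have hct : Real.cos t ≠ 0 := by
    intro h
    rw [Real.tan_eq_sin_div_cos, h, div_zero] at h2
    linarith
  have e1 : Real.sin s = s / 5 * Real.cos s := by
    rw [← h1, Real.tan_mul_cos hcs]
  have e2 : Real.sin t = t / 5 * Real.cos t := by
    rw [← h2, Real.tan_mul_cos hct]
  have hsin : Real.sin (t - s) = Real.cos s * Real.cos t * ((t - s) / 5) := by
    rw [Real.sin_sub, e1, e2]; ring
  have hcos : Real.cos (t - s) = Real.cos s * Real.cos t * (1 + s * t / 25) := by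
    rw [Real.cos_sub, e1, e2]; ring
  have hsp := Real.sin_pos_of_pos_of_lt_pi hd hlt
  have hp : 0 < Real.cos s * Real.cos t := by
    rw [hsin] at hsp
    exact pos_of_mul_pos_left hsp (by linarith)
  have hst0 : 0 < s * t := mul_pos hs (by linarith)
  have hcp : 0 < Real.cos (t - s) := by
    rw [hcos]; exact mul_pos hp (by linarith)
  have hhalf : t - s < Real.pi / 2 := by
    by_contra hh
    push Not at hh
    have := Real.cos_nonpos_of_pi_div_two_le_of_le hh (by linarith [Real.pi_pos])
    linarith
  have hl := Real.lt_tan hd hhalf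
  rw [Real.tan_eq_sin_div_cos, lt_div_iff₀ hcp, hsin, hcos] at hl
  have h3 : 0 < (Real.cos s * Real.cos t) * (t - s) := mul_pos hp hd
  have h4 := mul_pos h3 hst0
  nlinarith

/-- Counting solutions of `tan t = t/5` in `[A, B]` with `0 < A ≤ B`: the solution set
is finite, has at most `(B - A)/π + 1` elements, and contains at most one point in each
branch interval `(kπ - π/2, kπ + π/2)`. -/
theorem tan_eq_div_five_solutions (A B : ℝ) (hA : 0 < A) (hAB : A ≤ B) :
    ({t : ℝ | t ∈ Set.Icc A B ∧ Real.tan t = t / 5}).Finite ∧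
    (({t : ℝ | t ∈ Set.Icc A B ∧ Real.tan t = t / 5}).ncard : ℝ) ≤
      (B - A) / Real.pi + 1 ∧
    ∀ k : ℤ,
      ({t : ℝ | t ∈ Set.Icc A B ∧ Real.tan t = t / 5} ∩
        Set.Ioo ((k : ℝ) * Real.pi - Real.pi / 2)
          ((k : ℝ) * Real.pi + Real.pi / 2)).Subsingleton := by
  have hpi := Real.pi_pos
  set S := {t : ℝ | t ∈ Set.Icc A B ∧ Real.tan t = t / 5} with hS
  have gap : ∀ s ∈ S, ∀ t ∈ S, s < t → Real.pi ≤ t - s := fun s hs t ht hst =>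
    tan_gap s t (lt_of_lt_of_le hA hs.1.1) hst hs.2 ht.2
  have gap2 : ∀ s ∈ S, ∀ t ∈ S, |s - t| < Real.pi → s = t := by
    intro s hs t ht h
    rw [abs_lt] at h
    rcases lt_trichotomy s t with h' | h' | h'
    · linarith [gap s hs t ht h']
    · exact h'
    · linarith [gap t ht s hs h']
  let f : ℝ → ℕ := fun t => ⌊(t - A) / Real.pi⌋₊
  have hinj : Set.InjOn f S := by
    intro s hs t ht h
    apply gap2 s hs t ht
    have a1 := Nat.floor_le (div_nonneg (sub_nonneg.2 hs.1.1) hpi.le)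
    have a2 := Nat.lt_floor_add_one ((s - A) / Real.pi)
    have b1 := Nat.floor_le (div_nonneg (sub_nonneg.2 ht.1.1) hpi.le)
    have b2 := Nat.lt_floor_add_one ((t - A) / Real.pi)
    change ⌊(s - A) / Real.pi⌋₊ = ⌊(t - A) / Real.pi⌋₊ at h
    rw [h] at a1 a2
    rw [le_div_iff₀ hpi] at a1 b1
    rw [div_lt_iff₀ hpi] at a2 b2
    rw [abs_lt]
    constructor <;> linarith
  have hmaps : Set.MapsTo f S (Finset.range (⌊(B - A) / Real.pi⌋₊ + 1) : Set ℕ) := by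
    intro t ht
    simp only [Finset.coe_range, Set.mem_Iio, Nat.lt_succ_iff, f]
    have := ht.1.2
    apply Nat.floor_le_floor
    gcongr
  refine ⟨Set.Finite.of_injOn hmaps hinj (Finset.finite_toSet _), ?_, ?_⟩
  · have h := Set.ncard_le_ncard_of_injOn f hmaps hinj (Finset.finite_toSet _)
    rw [Set.ncard_coe_finset, Finset.card_range] at h
    have h' : (S.ncard : ℝ) ≤ (⌊(B - A) / Real.pi⌋₊ : ℝ) + 1 := by exact_mod_cast h
    linarith [Nat.floor_le (div_nonneg (sub_nonneg.2 hAB) hpi.le)]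
  · rintro k s ⟨hs, hs1, hs2⟩ t ⟨ht, ht1, ht2⟩
    apply gap2 s hs t ht
    rw [abs_lt]
    constructor <;> linarith
end

section
/- Fix a real number a with a > 3^{1/5}. Then there exists N ∈ ℕ such that for all n ≥ N, ∫_0^1 |gₙ′(u)| du ≥ 3ⁿ a^{−4n} / (2π (1 + 2π)⁴) − 1. -/
lemma hasDerivAt_aux (B u : ℝ) :
    HasDerivAt (fun u : ℝ => u ^ 5 * Real.sin (B / u))
      (5 * u ^ 4 * Real.sin (B / u) - B * u ^ 3 * Real.cos (B / u)) u := by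
  by_cases hu : u = 0
  · subst hu
    have h : (fun u : ℝ => u ^ 5 * Real.sin (B / u)) =O[nhds 0] fun u : ℝ => ‖u - 0‖ ^ 5 := by
      refine Asymptotics.IsBigO.of_bound 1 (Filter.Eventually.of_forall fun x => ?_)
      rw [norm_mul, norm_pow, norm_pow, norm_norm, sub_zero, one_mul]
      exact mul_le_of_le_one_right (by positivity) (Real.abs_sin_le_one _)
    have h2 := (h.hasFDerivAt (𝕜 := ℝ) (by norm_num)).hasDerivAt
    simpa using h2
  · have h1 : HasDerivAt (fun u : ℝ => B / u) (-B / u ^ 2) u := by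
      have h := (hasDerivAt_inv hu).const_mul B
      have he : -B / u ^ 2 = B * -(u ^ 2)⁻¹ := by ring
      rw [he]
      simpa only [div_eq_mul_inv] using h
    have h2 := (hasDerivAt_pow 5 u).mul h1.sin
    have he : 5 * u ^ 4 * Real.sin (B / u) - B * u ^ 3 * Real.cos (B / u) =
        ((5 : ℕ) : ℝ) * u ^ (5 - 1) * Real.sin (B / u) +
          u ^ 5 * (Real.cos (B / u) * (-B / u ^ 2)) := by
      push_cast
      field_simp
      ring
    rw [he]
    exact h2

theorem integral_abs_deriv_lower_bound (a : ℝ) (ha : (3 : ℝ) ^ ((1 : ℝ) / 5) < a)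
    (g : ℕ → ℝ → ℝ)
    (hg : ∀ (n : ℕ) (u : ℝ), u ≠ 0 →
      g n u = 3 ^ n * (a ^ (5 * n))⁻¹ * u ^ 5 * Real.sin (a ^ n / u))
    (hg0 : ∀ n : ℕ, g n 0 = 0) :
    ∃ N : ℕ, ∀ n : ℕ, N ≤ n →
      3 ^ n * (a ^ (4 * n))⁻¹ / (2 * Real.pi * (1 + 2 * Real.pi) ^ 4) - 1 ≤
        ∫ u in Set.Icc (0 : ℝ) 1, |deriv (g n) u| := by
  have ha1 : 1 < a := lt_of_le_of_lt (Real.one_le_rpow (by norm_num) (by norm_num)) ha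
  have ha0 : 0 < a := by linarith
  have ha5 : 3 < a ^ 5 := by
    have h := pow_lt_pow_left₀ ha (by positivity) (n := 5) (by norm_num)
    rw [← Real.rpow_natCast, ← Real.rpow_mul (by norm_num)] at h
    norm_num at h
    exact h
  have e1 : ∀ᶠ n : ℕ in Filter.atTop, 8 ≤ a ^ n :=
    (tendsto_pow_atTop_atTop_of_one_lt ha1).eventually_ge_atTop 8
  have e2 : ∀ᶠ n : ℕ in Filter.atTop, (3 / a ^ 5) ^ n < 1 / 5 :=
    (tendsto_pow_atTop_nhds_zero_of_lt_one (by positivity)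
      ((div_lt_one (by positivity)).2 ha5)).eventually_lt_const (by norm_num)
  obtain ⟨N, hN⟩ := Filter.eventually_atTop.1 (e1.and e2)
  refine ⟨N, fun n hn => ?_⟩
  obtain ⟨hA, hD⟩ := hN n hn
  have hDe : (3 / a ^ 5) ^ n = 3 ^ n * (a ^ (5 * n))⁻¹ := by
    rw [div_pow, ← pow_mul, div_eq_mul_inv]
  have hCe : 3 ^ n * (a ^ (4 * n))⁻¹ = 3 ^ n * (a ^ (5 * n))⁻¹ * a ^ n := by
    have : a ^ (5 * n) = a ^ (4 * n) * a ^ n := by rw [← pow_add]; congr 1; ring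
    rw [this]
    field_simp
  rw [hDe] at hD
  have hD0 : 0 < 3 ^ n * (a ^ (5 * n))⁻¹ := by positivity
  have hgn : g n = fun u => 3 ^ n * (a ^ (5 * n))⁻¹ * (u ^ 5 * Real.sin (a ^ n / u)) := by
    funext u
    by_cases hu : u = 0
    · subst hu; simp [hg0]
    · rw [hg n u hu]; ring
  rw [hCe]
  generalize 3 ^ n * (a ^ (5 * n))⁻¹ = D at *
  generalize a ^ n = A at *
  have hA0 : 0 < A := by linarith
  have hder : ∀ u, deriv (g n) u =
      D * (5 * u ^ 4 * Real.sin (A / u) - A * u ^ 3 * Real.cos (A / u)) := by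
    intro u
    rw [hgn]
    exact ((hasDerivAt_aux A u).const_mul D).deriv
  have hint : MeasureTheory.IntegrableOn (fun u => |deriv (g n) u|) (Set.Icc 0 1) := by
    refine MeasureTheory.Measure.integrableOn_of_bounded (M := D * (5 + A)) (by simp)
      (measurable_deriv (g n)).abs.aestronglyMeasurable ?_
    refine (MeasureTheory.ae_restrict_iff' measurableSet_Icc).2 (Filter.Eventually.of_forall ?_)
    rintro u ⟨hu0, hu1⟩
    rw [Real.norm_eq_abs, abs_abs, hder, abs_mul, abs_of_pos hD0]
    gcongr
    refine (abs_sub _ _).trans ?_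
    rw [abs_mul, abs_mul (A * u ^ 3), abs_of_nonneg (by positivity : 0 ≤ 5 * u ^ 4),
      abs_of_nonneg (by positivity : 0 ≤ A * u ^ 3)]
    have h4 : u ^ 4 ≤ 1 := pow_le_one₀ hu0 hu1
    have h3 : u ^ 3 ≤ 1 := pow_le_one₀ hu0 hu1
    have i1 : 5 * u ^ 4 * |Real.sin (A / u)| ≤ 5 * u ^ 4 :=
      mul_le_of_le_one_right (by positivity) (Real.abs_sin_le_one _)
    have i2 : A * u ^ 3 * |Real.cos (A / u)| ≤ A * u ^ 3 :=
      mul_le_of_le_one_right (by positivity) (Real.abs_cos_le_one _)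
    have i3 : A * u ^ 3 ≤ A := mul_le_of_le_one_right hA0.le h3
    linarith
  -- the primitive of a lower bound
  have hF : ∀ u : ℝ, HasDerivAt (fun u : ℝ => D / 4 * (A * u ^ 4 / 2 -
      (u ^ 5 + u ^ 5 * Real.sin (2 * A / u))) - u)
      (D / 4 * (A * (4 * u ^ 3) / 2 - (5 * u ^ 4 + (5 * u ^ 4 * Real.sin (2 * A / u)
        - 2 * A * u ^ 3 * Real.cos (2 * A / u)))) - 1) u := by
    intro u
    have p4 : HasDerivAt (fun u : ℝ => u ^ 4) (4 * u ^ 3) u := by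
      simpa using hasDerivAt_pow 4 u
    have p5 : HasDerivAt (fun u : ℝ => u ^ 5) (5 * u ^ 4) u := by
      simpa using hasDerivAt_pow 5 u
    exact (((((p4.const_mul A).div_const 2).sub (p5.add (hasDerivAt_aux (2 * A) u)))).const_mul
      (D / 4)).sub (hasDerivAt_id u)
  have key := intervalIntegral.sub_le_integral_of_hasDeriv_right_of_le (a := 0) (b := 1)
    zero_le_one (fun u _ => (hF u).continuousAt.continuousWithinAt)
    (fun u _ => (hF u).hasDerivWithinAt) hint (by
      rintro u ⟨hu0, hu1⟩
      rw [hder, abs_mul, abs_of_pos hD0]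
      have h4 : u ^ 4 ≤ 1 := pow_le_one₀ hu0.le hu1.le
      have hs : -1 ≤ Real.sin (2 * A / u) := Real.neg_one_le_sin _
      have hc2 : Real.cos (2 * A / u) = 2 * Real.cos (A / u) ^ 2 - 1 := by
        rw [← Real.cos_two_mul]; congr 1; ring
      rw [hc2]
      have hca : Real.cos (A / u) ^ 2 ≤ |Real.cos (A / u)| := by
        rw [← sq_abs]
        nlinarith [abs_nonneg (Real.cos (A / u)), Real.abs_cos_le_one (A / u)]
      have t : A * u ^ 3 * |Real.cos (A / u)| - 5 * u ^ 4 ≤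
          |5 * u ^ 4 * Real.sin (A / u) - A * u ^ 3 * Real.cos (A / u)| := by
        have t1 := abs_sub_abs_le_abs_sub (A * u ^ 3 * Real.cos (A / u))
          (5 * u ^ 4 * Real.sin (A / u))
        rw [abs_sub_comm, abs_mul, abs_mul (5 * u ^ 4),
          abs_of_nonneg (by positivity : 0 ≤ 5 * u ^ 4),
          abs_of_nonneg (by positivity : 0 ≤ A * u ^ 3)] at t1
        have i1 : 5 * u ^ 4 * |Real.sin (A / u)| ≤ 5 * u ^ 4 :=
          mul_le_of_le_one_right (by positivity) (Real.abs_sin_le_one _)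
        linarith
      have t2 := mul_le_mul_of_nonneg_left t hD0.le
      have t3 : A * u ^ 3 * Real.cos (A / u) ^ 2 ≤ A * u ^ 3 * |Real.cos (A / u)| :=
        mul_le_mul_of_nonneg_left hca (by positivity)
      have t4 := mul_le_mul_of_nonneg_left t3 hD0.le
      have t5 : D * (5 * u ^ 4) ≤ 1 := by nlinarith
      have t6 : 0 ≤ D * (u ^ 4 * (1 + Real.sin (2 * A / u))) :=
        mul_nonneg hD0.le (mul_nonneg (by positivity) (by linarith))
      linarith)
  rw [intervalIntegral.integral_of_le zero_le_one, ← MeasureTheory.integral_Icc_eq_integral_Ioc]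
    at key
  refine le_trans ?_ key
  have hs := Real.sin_le_one (2 * A / 1)
  have hpi := Real.pi_gt_three
  have hden : 16 ≤ 2 * Real.pi * (1 + 2 * Real.pi) ^ 4 := by
    have : (7 : ℝ) ^ 4 ≤ (1 + 2 * Real.pi) ^ 4 := by gcongr; linarith
    nlinarith
  have hq : D * A / (2 * Real.pi * (1 + 2 * Real.pi) ^ 4) ≤ D * A / 16 := by gcongr
  have := mul_le_mul_of_nonneg_left hs hD0.le
  have := mul_le_mul_of_nonneg_left hA hD0.le
  norm_num at *
  linarith
end
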